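/- arXiv:1104.1209 — 3 statements merged into one kernel-verified Lean document; each statement's English description precedes it below -/
import Mathlib

section
/- There exist absolute constants c₀ > 0 and C > 0 such that the following holds. Let ε > 0 and 0 < θ ≤ c₀·ε, let p be a polynomial of degree at most d on ℝ^n, and let X, Y, Z be independent standard n-dimensional Gaussian vectors. Then Pr_{X,Y,Z}( |p(X)| < ε · |D^θ_{Y,Z} p(X)| ) ≤ C · d² · ε. -/
open MeasureTheory ProbabilityTheory

/-- The standard Gaussian measure on `ℝ^n`. -/
noncomputable def stdGaussian (n : ℕ) : Measure (Fin n → ℝ) :=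
  Measure.pi fun _ => gaussianReal 0 1

/-- `N_Y^θ(X) = cos θ · X + sin θ · Y`. -/
noncomputable def noisy {n : ℕ} (θ : ℝ) (Y X : Fin n → ℝ) : Fin n → ℝ :=
  Real.cos θ • X + Real.sin θ • Y

/-- The noisy derivative `D_{Y,Z}^θ f (X)`. -/
noncomputable def noisyDeriv {n : ℕ} (θ : ℝ) (Y Z : Fin n → ℝ)
    (f : (Fin n → ℝ) → ℝ) (X : Fin n → ℝ) : ℝ :=
  (f (noisy θ Y X) - f (noisy θ Z X)) / θ

/-- `|f_θ^{(ℓ)}(X)|₂²`, the mean square of the `ℓ`-fold noisy derivative over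
independent standard Gaussian directions. -/
noncomputable def derivNormSq (n : ℕ) (θ : ℝ) : ℕ → ((Fin n → ℝ) → ℝ) → (Fin n → ℝ) → ℝ
  | 0, f, X => (f X) ^ 2
  | (ℓ+1), f, X =>
      ∫ YZ : (Fin n → ℝ) × (Fin n → ℝ),
        derivNormSq n θ ℓ (noisyDeriv θ YZ.1 YZ.2 f) X
        ∂((stdGaussian n).prod (stdGaussian n))

/-- The averaging operator `A^θ f (X) = E_Y[f(N_Y^θ(X))]`. -/
noncomputable def avgOp (n : ℕ) (θ : ℝ) (f : (Fin n → ℝ) → ℝ) (X : Fin n → ℝ) : ℝ :=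
  ∫ Y, f (noisy θ Y X) ∂(stdGaussian n)

/-- `q_{ℓ,m}(X) = |p_θ^{(ℓ),m}(X)|₂² = (A^θ)^m |p_θ^{(ℓ)}(X)|₂²`. -/
noncomputable def qlm (n : ℕ) (θ : ℝ) (p : MvPolynomial (Fin n) ℝ) (ℓ m : ℕ)
    (X : Fin n → ℝ) : ℝ :=
  (avgOp n θ)^[m] (derivNormSq n θ ℓ (fun W => MvPolynomial.eval W p)) X

/-- The Gaussian `L^k` norm of a function on `ℝ^n`. -/
noncomputable def gaussNorm (n : ℕ) (k : ℝ) (p : (Fin n → ℝ) → ℝ) : ℝ :=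
  (∫ X, |p X| ^ k ∂(stdGaussian n)) ^ (1 / k)

/-- `f` is a degree-`d` polynomial threshold function on `ℝ^n`. -/
def isPTF (n d : ℕ) (f : (Fin n → ℝ) → ℝ) : Prop :=
  ∃ p : MvPolynomial (Fin n) ℝ, p.totalDegree ≤ d ∧
    ∀ x, f x = Real.sign (MvPolynomial.eval x p)

/-- `X` is a `k`-independent family of standard Gaussians: any `m ≤ k` distinct
coordinates are jointly distributed as `m` independent standard Gaussians. -/
def kIndepGaussian {Ω : Type} [MeasurableSpace Ω] (n k : ℕ) (P : Measure Ω)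
    (X : Ω → (Fin n → ℝ)) : Prop :=
  ∀ m : ℕ, m ≤ k → ∀ ι : Fin m → Fin n, Function.Injective ι →
    Measure.map (fun ω i => X ω (ι i)) P = Measure.pi fun _ : Fin m => gaussianReal 0 1

/-!
If `X, Y` are independent centred Gaussians, then so are `X_φ = cos φ • X + sin φ • Y` and
`Y_φ = -sin φ • X + cos φ • Y`, and `cos θ • X_φ + sin θ • Y_φ = X_{φ + θ}`. It therefore suffices
to fix `X` and `Y` and to estimate, for a uniform angle `φ`, how often the trigonometric polynomial
`g φ = p (X_φ)` of degree at most `d` satisfies `|g (φ + θ) - g φ| > (θ / 2ε) |g φ|`. Up to a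
unimodular factor, `g φ` is the value at `e^{iφ}` of a complex polynomial with at most `2d` roots,
and it can vary this fast only where `e^{iφ}` is within `O(dε)` of one of the roots. The triangle
inequality through `p (X)` reduces the noisy derivative to two such increments.
-/

section Polynomial

open Polynomial

lemma norm_prod_sub_prod_le_of_norm_sub_le {K : Type*} [NormedField K] {s : Multiset K}
    {z z' : K} {t : ℝ} (ht : 0 ≤ t) (h : ∀ r ∈ s, ‖z' - z‖ ≤ t * ‖z - r‖) :
    ‖(s.map (z' - ·)).prod - (s.map (z - ·)).prod‖ ≤
      ((1 + t) ^ s.card - 1) * ‖(s.map (z - ·)).prod‖ := by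
  induction s using Multiset.induction_on with
  | empty => simp
  | cons a s ih =>
    have ih := ih fun r hr ↦ h r (Multiset.mem_cons_of_mem hr)
    have hz : ‖z' - z‖ ≤ t * ‖z - a‖ := h a (Multiset.mem_cons_self a s)
    simp only [Multiset.map_cons, Multiset.prod_cons, Multiset.card_cons, norm_mul]
    set P := (s.map (z - ·)).prod
    set P' := (s.map (z' - ·)).prod
    have hz' : ‖z' - a‖ ≤ (1 + t) * ‖z - a‖ := by
      linarith [norm_sub_le_norm_sub_add_norm_sub z' z a]
    calc ‖(z' - a) * P' - (z - a) * P‖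
        = ‖(z' - a) * (P' - P) + (z' - z) * P‖ := by ring_nf
      _ ≤ ‖z' - a‖ * ‖P' - P‖ + ‖z' - z‖ * ‖P‖ := by
        simpa only [norm_mul] using norm_add_le ((z' - a) * (P' - P)) ((z' - z) * P)
      _ ≤ (1 + t) * ‖z - a‖ * (((1 + t) ^ s.card - 1) * ‖P‖) + t * ‖z - a‖ * ‖P‖ := by gcongr
      _ = ((1 + t) ^ (s.card + 1) - 1) * (‖z - a‖ * ‖P‖) := by ring

lemma one_add_pow_sub_one_le_two_mul {t : ℝ} {m : ℕ} (ht : 0 ≤ t) (hmt : m * t ≤ 1) :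
    (1 + t) ^ m - 1 ≤ 2 * (m * t) := by
  have hmt0 : 0 ≤ m * t := by positivity
  calc (1 + t) ^ m - 1
      ≤ Real.exp t ^ m - 1 := by gcongr; linarith [Real.add_one_le_exp t]
    _ = Real.exp (m * t) - 1 := by rw [Real.exp_nat_mul]
    _ ≤ |Real.exp (m * t) - 1| := le_abs_self _
    _ ≤ 2 * |m * t| := Real.abs_exp_sub_one_le (by rwa [abs_of_nonneg hmt0])
    _ = 2 * (m * t) := by rw [abs_of_nonneg hmt0]

lemma norm_eval_sub_eval_le_of_splits {K : Type*} [NormedField K] {Q : K[X]} (hQ : Q.Splits)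
    {z z' : K} {t : ℝ} (ht : 0 ≤ t) (hQt : Q.natDegree * t ≤ 1)
    (h : ∀ r ∈ Q.roots, ‖z' - z‖ ≤ t * ‖z - r‖) :
    ‖Q.eval z' - Q.eval z‖ ≤ 2 * (Q.natDegree * t) * ‖Q.eval z‖ := by
  have hprod := norm_prod_sub_prod_le_of_norm_sub_le ht h
  rw [← hQ.natDegree_eq_card_roots] at hprod
  rw [hQ.eval_eq_prod_roots, hQ.eval_eq_prod_roots, ← mul_sub, norm_mul, norm_mul, mul_left_comm]
  grw [hprod, one_add_pow_sub_one_le_two_mul ht hQt]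

end Polynomial

section TrigPolynomial

open Complex Polynomial

/-- `g` is a real trigonometric polynomial of degree at most `d`. The condition that `g` is a
combination of `e^{ikφ}` with `|k| ≤ d` is encoded as: `e^{idφ} g φ` is a polynomial in `e^{iφ}` of
degree at most `2d`, so that the roots of that polynomial control `g`. -/
def IsTrigPolynomial (d : ℕ) (g : ℝ → ℝ) : Prop :=
  ∃ Q : ℂ[X], Q.natDegree ≤ 2 * d ∧
    ∀ φ : ℝ, Q.eval (exp (I * φ)) = exp (I * φ) ^ d * g φ

lemma norm_exp_I_mul_sub_exp_I_mul_le (a b : ℝ) : ‖exp (I * a) - exp (I * b)‖ ≤ |a - b| :=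
  calc ‖exp (I * a) - exp (I * b)‖
      = ‖exp (I * b) * (exp (I * (a - b : ℝ)) - 1)‖ := by
        rw [mul_sub, mul_one, ← Complex.exp_add]
        push_cast
        ring_nf
    _ = ‖exp (I * (a - b : ℝ)) - 1‖ := by rw [norm_mul, norm_exp_I_mul_ofReal, one_mul]
    _ ≤ |a - b| := Real.norm_exp_I_mul_ofReal_sub_one_le

namespace IsTrigPolynomial

variable {d e : ℕ} {f g : ℝ → ℝ}

lemma mono (hg : IsTrigPolynomial d g) (hde : d ≤ e) : IsTrigPolynomial e g := by
  obtain ⟨Q, hdeg, hQ⟩ := hg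
  refine ⟨X ^ (e - d) * Q, ?_, fun φ ↦ ?_⟩
  · calc (X ^ (e - d) * Q).natDegree
        ≤ (e - d) + 2 * d := by grw [natDegree_mul_le, natDegree_X_pow, hdeg]
      _ ≤ 2 * e := by omega
  · rw [eval_mul, eval_pow, eval_X, hQ, ← mul_assoc, ← pow_add, Nat.sub_add_cancel hde]

lemma const (c : ℝ) : IsTrigPolynomial 0 fun _ ↦ c :=
  ⟨C (c : ℂ), by simp, by simp⟩

lemma add (hf : IsTrigPolynomial d f) (hg : IsTrigPolynomial d g) :
    IsTrigPolynomial d fun φ ↦ f φ + g φ := by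
  obtain ⟨P, hPdeg, hP⟩ := hf
  obtain ⟨Q, hQdeg, hQ⟩ := hg
  refine ⟨P + Q, natDegree_add_le_of_degree_le hPdeg hQdeg, fun φ ↦ ?_⟩
  rw [eval_add, hP, hQ, ofReal_add, mul_add]

lemma mul (hf : IsTrigPolynomial d f) (hg : IsTrigPolynomial e g) :
    IsTrigPolynomial (d + e) fun φ ↦ f φ * g φ := by
  obtain ⟨P, hPdeg, hP⟩ := hf
  obtain ⟨Q, hQdeg, hQ⟩ := hg
  refine ⟨P * Q, ?_, fun φ ↦ ?_⟩
  · grw [natDegree_mul_le, hPdeg, hQdeg, mul_add]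
  · rw [eval_mul, hP, hQ, ofReal_mul]
    ring

lemma pow (hg : IsTrigPolynomial d g) (m : ℕ) : IsTrigPolynomial (m * d) fun φ ↦ g φ ^ m := by
  induction m with
  | zero => simpa using const 1
  | succ m ih => simpa only [pow_succ, Nat.succ_mul] using ih.mul hg

lemma sum {ι : Type*} {s : Finset ι} {g : ι → ℝ → ℝ} (hg : ∀ i ∈ s, IsTrigPolynomial d (g i)) :
    IsTrigPolynomial d fun φ ↦ ∑ i ∈ s, g i φ := by
  induction s using Finset.cons_induction with
  | empty => simpa using (const 0).mono d.zero_le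
  | cons a s ha ih =>
    rw [Finset.forall_mem_cons] at hg
    simpa only [Finset.sum_cons] using hg.1.add (ih hg.2)

lemma prod {ι : Type*} {s : Finset ι} {d : ι → ℕ} {g : ι → ℝ → ℝ}
    (hg : ∀ i ∈ s, IsTrigPolynomial (d i) (g i)) :
    IsTrigPolynomial (∑ i ∈ s, d i) fun φ ↦ ∏ i ∈ s, g i φ := by
  induction s using Finset.cons_induction with
  | empty => simpa using const 1
  | cons a s ha ih =>
    rw [Finset.forall_mem_cons] at hg
    simpa only [Finset.sum_cons, Finset.prod_cons] using hg.1.mul (ih hg.2)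

lemma cos_mul_add_sin_mul (a b : ℝ) :
    IsTrigPolynomial 1 fun φ ↦ Real.cos φ * a + Real.sin φ * b := by
  refine ⟨C ((a : ℂ) / 2) * (X ^ 2 + 1) + C ((b : ℂ) / (2 * I)) * (X ^ 2 - 1),
    by compute_degree, fun φ ↦ ?_⟩
  have hexp : exp (I * φ) = cos φ + sin φ * I := by rw [mul_comm, exp_mul_I]
  have hcos : exp (I * φ) ^ 2 + 1 = 2 * cos φ * exp (I * φ) := by
    rw [hexp]
    linear_combination sin (φ : ℂ) ^ 2 * I_sq - sin_sq_add_cos_sq (φ : ℂ)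
  have hsin : exp (I * φ) ^ 2 - 1 = 2 * I * sin φ * exp (I * φ) := by
    rw [hexp]
    linear_combination -sin (φ : ℂ) ^ 2 * I_sq + sin_sq_add_cos_sq (φ : ℂ)
  simp only [eval_add, eval_sub, eval_mul, eval_C, eval_pow, eval_X, eval_one, hcos, hsin]
  push_cast
  field_simp

lemma mvPolynomial_eval {σ : Type*} {x : ℝ → σ → ℝ} (hx : ∀ i, IsTrigPolynomial 1 fun φ ↦ x φ i)
    (p : MvPolynomial σ ℝ) : IsTrigPolynomial p.totalDegree fun φ ↦ MvPolynomial.eval (x φ) p := by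
  simp only [MvPolynomial.eval_eq]
  refine sum fun m hm ↦ ?_
  have hmonomial : IsTrigPolynomial (m.sum fun _ k ↦ k) fun φ ↦ ∏ i ∈ m.support, x φ i ^ m i := by
    simpa only [mul_one, Finsupp.sum] using prod fun i _ ↦ (hx i).pow (m i)
  exact ((const (p.coeff m)).mul hmonomial).mono
    ((zero_add _).trans_le (MvPolynomial.le_totalDegree hm))

lemma eval_cos_smul_add_sin_smul {σ : Type*} (p : MvPolynomial σ ℝ) (x y : σ → ℝ) :
    IsTrigPolynomial p.totalDegree fun φ ↦
      MvPolynomial.eval (Real.cos φ • x + Real.sin φ • y) p :=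
  mvPolynomial_eval (fun i ↦ cos_mul_add_sin_mul (x i) (y i)) p

lemma abs_increment_le_of_eval_exp_eq {Q : ℂ[X]}
    (hQ : ∀ φ : ℝ, Q.eval (exp (I * φ)) = exp (I * φ) ^ d * g φ) (φ ψ : ℝ) :
    |g ψ - g φ| ≤ ‖Q.eval (exp (I * ψ)) - Q.eval (exp (I * φ))‖ + d * |ψ - φ| * |g φ| := by
  have hpow (α : ℝ) : exp (I * α) ^ d = exp (I * (d * α : ℝ)) := by
    rw [← Complex.exp_nat_mul]
    push_cast
    ring_nf
  have hphase : ‖exp (I * ψ) ^ d - exp (I * φ) ^ d‖ ≤ d * |ψ - φ| := by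
    grw [hpow, hpow, norm_exp_I_mul_sub_exp_I_mul_le, ← mul_sub, abs_mul, Nat.abs_cast]
  calc |g ψ - g φ|
      = ‖exp (I * ψ) ^ d * (g ψ - g φ : ℝ)‖ := by
        rw [norm_mul, norm_pow, norm_exp_I_mul_ofReal, one_pow, one_mul, norm_real,
          Real.norm_eq_abs]
    _ = ‖(Q.eval (exp (I * ψ)) - Q.eval (exp (I * φ))) -
          (exp (I * ψ) ^ d - exp (I * φ) ^ d) * g φ‖ := by
        rw [hQ, hQ]
        push_cast
        ring_nf
    _ ≤ ‖Q.eval (exp (I * ψ)) - Q.eval (exp (I * φ))‖ + d * |ψ - φ| * |g φ| := by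
        grw [norm_sub_le, norm_mul, hphase, norm_real, Real.norm_eq_abs]

lemma exists_finset_increment_le (hg : IsTrigPolynomial d g) :
    ∃ S : Finset ℂ, S.card ≤ 2 * d ∧ ∀ δ φ θ : ℝ, 0 < δ → δ ≤ 1 → 2 * d * |θ| ≤ δ →
      (∀ r ∈ S, δ ≤ ‖exp (I * φ) - r‖) →
      δ * |g (φ + θ) - g φ| ≤ 5 * d * |θ| * |g φ| := by
  classical
  obtain ⟨Q, hdeg, hQ⟩ := hg
  refine ⟨Q.roots.toFinset,
    ((Multiset.toFinset_card_le _).trans (card_roots' Q)).trans hdeg, ?_⟩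
  intro δ φ θ hδ hδ1 hθδ hroots
  set z := exp (I * φ)
  set z' := exp (I * (φ + θ : ℝ))
  have hdegR : (Q.natDegree : ℝ) ≤ 2 * d := by exact_mod_cast hdeg
  have hgQ : ‖Q.eval z‖ = |g φ| := by simp [z, hQ, norm_exp_I_mul_ofReal]
  have hdist : ‖z' - z‖ ≤ |θ| :=
    (norm_exp_I_mul_sub_exp_I_mul_le (φ + θ) φ).trans_eq (by rw [add_sub_cancel_left])
  have hsmall : Q.natDegree * (|θ| / δ) ≤ 1 := by
    grw [hdegR, ← mul_div_assoc, hθδ, div_self hδ.ne']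
  have hQincr : ‖Q.eval z' - Q.eval z‖ ≤ 4 * d * (|θ| / δ) * |g φ| :=
    calc ‖Q.eval z' - Q.eval z‖
        ≤ 2 * (Q.natDegree * (|θ| / δ)) * ‖Q.eval z‖ := by
          refine norm_eval_sub_eval_le_of_splits (IsAlgClosed.splits Q) (by positivity) hsmall
            fun r hr ↦ ?_
          grw [← hroots r (Multiset.mem_toFinset.2 hr), div_mul_cancel₀ _ hδ.ne', hdist]
      _ ≤ 2 * (2 * d * (|θ| / δ)) * |g φ| := by grw [hdegR, hgQ]
      _ = 4 * d * (|θ| / δ) * |g φ| := by ring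
  calc δ * |g (φ + θ) - g φ|
      ≤ δ * (4 * d * (|θ| / δ) * |g φ| + d * |θ| * |g φ|) := by
        grw [abs_increment_le_of_eval_exp_eq hQ φ (φ + θ), hQincr, add_sub_cancel_left]
    _ = 4 * d * |θ| * |g φ| + δ * (d * |θ| * |g φ|) := by field_simp
    _ ≤ 4 * d * |θ| * |g φ| + 1 * (d * |θ| * |g φ|) := by gcongr
    _ = 5 * d * |θ| * |g φ| := by ring

end IsTrigPolynomial

lemma volume_setOf_norm_exp_sub_lt_le (r : ℂ) (δ : ℝ) :
    volume {φ ∈ Set.Ico 0 Real.pi | ‖exp (I * φ) - r‖ < δ} ≤ ENNReal.ofReal (Real.pi * δ) := by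
  refine (Real.volume_le_diam _).trans (Metric.ediam_le ?_)
  rintro a ⟨⟨ha0, haπ⟩, ha⟩ b ⟨⟨hb0, hbπ⟩, hb⟩
  rw [edist_dist, Real.dist_eq]
  refine ENNReal.ofReal_le_ofReal ?_
  have hangle : InnerProductGeometry.angle (exp (I * a)) (exp (I * b)) = |a - b| := by
    rw [mul_comm I, mul_comm I, angle_exp_exp, (toIocMod_eq_self _).2]
    constructor <;> linarith
  calc |a - b|
      ≤ Real.pi / 2 * ‖exp (I * a) - exp (I * b)‖ := by
        rw [← hangle]
        exact angle_le_mul_norm_sub (norm_exp_I_mul_ofReal a) (norm_exp_I_mul_ofReal b)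
    _ ≤ Real.pi / 2 * (δ + δ) := by
        grw [norm_sub_le_norm_sub_add_norm_sub _ r, norm_sub_rev r, ha, hb]
    _ = Real.pi * δ := by ring

lemma IsTrigPolynomial.volume_setOf_lt_increment_le {d : ℕ} {g : ℝ → ℝ} (hg : IsTrigPolynomial d g)
    {δ θ : ℝ} (hδ : 0 < δ) (hδ1 : δ ≤ 1) (hθδ : 2 * d * |θ| ≤ δ) :
    volume {φ ∈ Set.Ico 0 Real.pi | 5 * d * |θ| * |g φ| < δ * |g (φ + θ) - g φ|} ≤
      ENNReal.ofReal Real.pi * ENNReal.ofReal (2 * d * δ) := by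
  obtain ⟨S, hcard, hS⟩ := hg.exists_finset_increment_le
  have hsub : {φ ∈ Set.Ico 0 Real.pi | 5 * d * |θ| * |g φ| < δ * |g (φ + θ) - g φ|} ⊆
      ⋃ r ∈ S, {φ ∈ Set.Ico 0 Real.pi | ‖exp (I * φ) - r‖ < δ} := by
    rintro φ ⟨hφ, hlt⟩
    by_contra! hfar
    simp only [Set.mem_iUnion, Set.mem_ofPred_eq, not_exists, not_and, not_lt] at hfar
    exact hlt.not_ge (hS δ φ θ hδ hδ1 hθδ fun r hr ↦ hfar r hr hφ)
  calc volume {φ ∈ Set.Ico 0 Real.pi | 5 * d * |θ| * |g φ| < δ * |g (φ + θ) - g φ|}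
      ≤ ∑ r ∈ S, volume {φ ∈ Set.Ico 0 Real.pi | ‖exp (I * φ) - r‖ < δ} :=
        (measure_mono hsub).trans (measure_biUnion_finset_le _ _)
    _ ≤ ∑ _r ∈ S, ENNReal.ofReal (Real.pi * δ) :=
        Finset.sum_le_sum fun r _ ↦ volume_setOf_norm_exp_sub_lt_le r δ
    _ = ENNReal.ofReal (S.card * (Real.pi * δ)) := by
        rw [Finset.sum_const, nsmul_eq_mul, ENNReal.ofReal_mul (Nat.cast_nonneg _),
          ENNReal.ofReal_natCast]
    _ ≤ ENNReal.ofReal (Real.pi * (2 * d * δ)) := by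
        have hcardR : (S.card : ℝ) ≤ 2 * d := by exact_mod_cast hcard
        refine ENNReal.ofReal_le_ofReal ?_
        grw [hcardR]
        exact le_of_eq (by ring)
    _ = ENNReal.ofReal Real.pi * ENNReal.ofReal (2 * d * δ) :=
        ENNReal.ofReal_mul Real.pi_pos.le

end TrigPolynomial

section Measure

open scoped ENNReal

lemma measure_univ_mul_le_of_measurePreserving {α Ω : Type*} [MeasurableSpace α]
    [MeasurableSpace Ω] {ν : Measure α} [SFinite ν] {P : Measure Ω} [SFinite P] {T : α → Ω → Ω}
    (hT : Measurable (Function.uncurry T)) (hTP : ∀ a, MeasurePreserving (T a) P P) {B : Set Ω}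
    (hB : MeasurableSet B) {c : ℝ≥0∞} (hc : ∀ ω, ν {a | T a ω ∈ B} ≤ c) :
    ν Set.univ * P B ≤ c * P Set.univ :=
  calc ν Set.univ * P B
      = ∫⁻ a, P (T a ⁻¹' B) ∂ν := by
        simp [(hTP _).measure_preimage hB.nullMeasurableSet, mul_comm]
    _ = (ν.prod P) (Function.uncurry T ⁻¹' B) := (Measure.prod_apply (hT hB)).symm
    _ = ∫⁻ ω, ν {a | T a ω ∈ B} ∂P := Measure.prod_apply_symm (hT hB)
    _ ≤ ∫⁻ _, c ∂P := lintegral_mono hc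
    _ = c * P Set.univ := lintegral_const c

lemma measure_prod_prod_setOf_mem_or_mem_le {α β : Type*} [MeasurableSpace α] [MeasurableSpace β]
    {μ : Measure α} [SFinite μ] {ρ : Measure β} [IsProbabilityMeasure ρ] {B : Set (α × β)}
    (hB : MeasurableSet B) :
    (μ.prod (ρ.prod ρ)) {W | (W.1, W.2.1) ∈ B ∨ (W.1, W.2.2) ∈ B} ≤ 2 * (μ.prod ρ) B := by
  have hfst : MeasurePreserving (fun W : α × β × β ↦ (W.1, W.2.1)) (μ.prod (ρ.prod ρ))
      (μ.prod ρ) := (MeasurePreserving.id μ).prod measurePreserving_fst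
  have hsnd : MeasurePreserving (fun W : α × β × β ↦ (W.1, W.2.2)) (μ.prod (ρ.prod ρ))
      (μ.prod ρ) := (MeasurePreserving.id μ).prod measurePreserving_snd
  refine (measure_union_le _ _).trans_eq ?_
  rw [two_mul]
  exact congrArg₂ (· + ·) (hfst.measure_preimage hB.nullMeasurableSet)
    (hsnd.measure_preimage hB.nullMeasurableSet)

end Measure

section Gaussian

lemma isGaussian_pi {ι : Type*} [Fintype ι] {E : ι → Type*} [∀ i, NormedAddCommGroup (E i)]
    [∀ i, NormedSpace ℝ (E i)] [∀ i, MeasurableSpace (E i)] [∀ i, BorelSpace (E i)]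
    [∀ i, CompleteSpace (E i)] [∀ i, SecondCountableTopology (E i)] (μ : ∀ i, Measure (E i))
    [∀ i, IsGaussian (μ i)] : IsGaussian (Measure.pi μ) := by
  have hlaw (i : ι) : HasGaussianLaw (fun x : ∀ i, E i ↦ x i) (Measure.pi μ) :=
    ⟨by rw [(measurePreserving_eval μ i).map_eq]; infer_instance⟩
  have hindep : iIndepFun (fun i (x : ∀ i, E i) ↦ x i) (Measure.pi μ) :=
    iIndepFun_pi (X := fun _ ↦ id) fun _ ↦ aemeasurable_id
  simpa using (hindep.hasGaussianLaw hlaw).isGaussian_map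

namespace stdGaussian

instance (n : ℕ) : IsGaussian (_root_.stdGaussian n) := isGaussian_pi _

lemma integral_id (n : ℕ) : ∫ x, x ∂(_root_.stdGaussian n) = 0 := by
  ext i
  calc (∫ x, x ∂(_root_.stdGaussian n)) i
      = ∫ x, x i ∂(_root_.stdGaussian n) :=
        eval_integral (fun _ ↦ integrable_eval IsGaussian.integrable_id) i
    _ = ∫ x, x ∂(gaussianReal 0 1) := integral_eval
    _ = 0 := integral_id_gaussianReal

end stdGaussian

variable {E : Type*} [NormedAddCommGroup E] [NormedSpace ℝ E] [CompleteSpace E]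
  [SecondCountableTopology E] [MeasurableSpace E] [BorelSpace E] {μ : Measure E} [IsGaussian μ]
  {f : E → ℝ} {d : ℕ} {θ : ℝ}

lemma measure_prod_setOf_lt_increment_le (hμ : ∫ x, x ∂μ = 0) (hf : Measurable f)
    (hfd : ∀ x y, IsTrigPolynomial d fun φ ↦ f (Real.cos φ • x + Real.sin φ • y)) {δ : ℝ}
    (hδ : 0 < δ) (hδ1 : δ ≤ 1) (hθδ : 2 * d * |θ| ≤ δ) :
    (μ.prod μ) {W | 5 * d * |θ| * |f W.1| < δ * |f (Real.cos θ • W.1 + Real.sin θ • W.2) - f W.1|} ≤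
      ENNReal.ofReal (2 * d * δ) := by
  set B : Set (E × E) :=
    {W | 5 * d * |θ| * |f W.1| < δ * |f (Real.cos θ • W.1 + Real.sin θ • W.2) - f W.1|}
  have hB : MeasurableSet B := measurableSet_lt (by fun_prop) (by fun_prop)
  let T (φ : ℝ) (W : E × E) : E × E := ContinuousLinearMap.rotation φ W
  have hT : Measurable (Function.uncurry T) := by
    simp only [T, Function.uncurry_def, ContinuousLinearMap.rotation_apply]
    fun_prop
  have hTμ (φ : ℝ) : MeasurePreserving (T φ) (μ.prod μ) (μ.prod μ) :=
    ⟨by fun_prop, IsGaussian.map_rotation_eq_self hμ φ⟩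
  have hangle (W : E × E) (φ : ℝ) : Real.cos θ • (T φ W).1 + Real.sin θ • (T φ W).2 =
      Real.cos (φ + θ) • W.1 + Real.sin (φ + θ) • W.2 := by
    simp only [T, ContinuousLinearMap.rotation_apply, Real.cos_add, Real.sin_add]
    module
  have hfiber (W : E × E) : (volume.restrict (Set.Ico 0 Real.pi)) {φ | T φ W ∈ B} ≤
      ENNReal.ofReal Real.pi * ENNReal.ofReal (2 * d * δ) := by
    rw [Measure.restrict_apply' measurableSet_Ico, Set.inter_comm]
    simpa only [B, Set.mem_ofPred_eq, hangle] using!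
      (hfd W.1 W.2).volume_setOf_lt_increment_le hδ hδ1 hθδ
  have haverage := measure_univ_mul_le_of_measurePreserving hT hTμ hB hfiber
  rw [Measure.restrict_apply_univ, Real.volume_Ico, sub_zero, measure_univ, mul_one] at haverage
  exact (ENNReal.mul_le_mul_iff_right (by simp [Real.pi_pos]) ENNReal.ofReal_ne_top).1 haverage

lemma mul_abs_lt_or_of_mul_abs_lt_mul_abs_sub {u v w s t δ ε : ℝ} (ht : 0 ≤ t) (hs : 0 ≤ s)
    (hε : 0 ≤ ε) (hδ : 2 * s * ε < δ) (h : t * |u| < ε * |v - w|) :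
    s * t * |u| < δ * |v - u| ∨ s * t * |u| < δ * |w - u| := by
  by_contra! hle
  have hvw : 0 < |v - w| := pos_of_mul_pos_right ((by positivity : 0 ≤ t * |u|).trans_lt h) hε
  have hδ0 : 0 ≤ δ := (by positivity : 0 ≤ 2 * s * ε).trans hδ.le
  have : δ * |v - w| < δ * |v - w| :=
    calc δ * |v - w|
        ≤ δ * |v - u| + δ * |w - u| := by grw [abs_sub_le v u w, abs_sub_comm u w, mul_add]
      _ ≤ 2 * s * (t * |u|) := by linarith [hle.1, hle.2]
      _ ≤ 2 * s * (ε * |v - w|) := by gcongr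
      _ = 2 * s * ε * |v - w| := by ring
      _ < δ * |v - w| := by gcongr
  exact this.false

lemma measure_prod_prod_setOf_lt_mul_increment_le (hμ : ∫ x, x ∂μ = 0) (hf : Measurable f)
    (hfd : ∀ x y, IsTrigPolynomial d fun φ ↦ f (Real.cos φ • x + Real.sin φ • y)) {ε δ : ℝ}
    (hθε : |θ| ≤ ε) (hεδ : 10 * d * ε < δ) (hδ1 : δ ≤ 1) :
    (μ.prod (μ.prod μ)) {W | |θ| * |f W.1| <
        ε * |f (Real.cos θ • W.1 + Real.sin θ • W.2.1) -
          f (Real.cos θ • W.1 + Real.sin θ • W.2.2)|} ≤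
      ENNReal.ofReal (4 * d * δ) := by
  have hε : 0 ≤ ε := (abs_nonneg θ).trans hθε
  have hdε : 0 ≤ d * ε := by positivity
  have hδ : 0 < δ := by linarith
  have hθδ : 2 * d * |θ| ≤ δ := by
    grw [hθε]
    linarith
  set B : Set (E × E) :=
    {W | 5 * d * |θ| * |f W.1| < δ * |f (Real.cos θ • W.1 + Real.sin θ • W.2) - f W.1|}
  have hB : MeasurableSet B := measurableSet_lt (by fun_prop) (by fun_prop)
  have hsub : {W : E × E × E | |θ| * |f W.1| <
        ε * |f (Real.cos θ • W.1 + Real.sin θ • W.2.1) -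
          f (Real.cos θ • W.1 + Real.sin θ • W.2.2)|} ⊆
      {W | (W.1, W.2.1) ∈ B ∨ (W.1, W.2.2) ∈ B} := by
    rintro ⟨x, y, z⟩ hlt
    exact mul_abs_lt_or_of_mul_abs_lt_mul_abs_sub (abs_nonneg θ) (by positivity) hε
      (by linarith) hlt
  calc _ ≤ 2 * (μ.prod μ) B :=
        (measure_mono hsub).trans (measure_prod_prod_setOf_mem_or_mem_le hB)
    _ ≤ ENNReal.ofReal 2 * ENNReal.ofReal (2 * d * δ) := by
        grw [ENNReal.ofReal_ofNat, measure_prod_setOf_lt_increment_le hμ hf hfd hδ hδ1 hθδ]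
    _ = ENNReal.ofReal (4 * d * δ) := by
        rw [← ENNReal.ofReal_mul zero_le_two]
        ring_nf

theorem stmt8_general (hμ : ∫ x, x ∂μ = 0) (hf : Measurable f)
    (hfd : ∀ x y, IsTrigPolynomial d fun φ ↦ f (Real.cos φ • x + Real.sin φ • y)) {ε : ℝ}
    (hθ : θ ≠ 0) (hθε : |θ| ≤ ε) :
    (μ.prod (μ.prod μ)).real {W | |f W.1| <
        ε * |(f (Real.cos θ • W.1 + Real.sin θ • W.2.1) -
          f (Real.cos θ • W.1 + Real.sin θ • W.2.2)) / θ|} ≤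
      80 * d ^ 2 * ε := by
  have hε : 0 < ε := (abs_pos.2 hθ).trans_le hθε
  simp only [abs_div, ← mul_div_assoc, lt_div_iff₀' (abs_pos.2 hθ)]
  have hbound {δ : ℝ} (hεδ : 10 * d * ε < δ) (hδ1 : δ ≤ 1) := ENNReal.toReal_le_of_le_ofReal
    (by nlinarith [show 0 ≤ (d : ℝ) * ε by positivity, (d.cast_nonneg : (0 : ℝ) ≤ d)])
    (measure_prod_prod_setOf_lt_mul_increment_le hμ hf hfd hθε hεδ hδ1)
  rcases d.eq_zero_or_pos with rfl | hd
  · simpa [measureReal_def] using hbound (δ := 1) (by simp) le_rfl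
  have hd1 : (1 : ℝ) ≤ d := by exact_mod_cast hd
  rcases le_or_gt (20 * d * ε) 1 with hsmall | hlarge
  · refine (hbound (δ := 20 * d * ε) (by gcongr; norm_num) hsmall).trans_eq ?_
    ring
  · exact measureReal_le_one.trans (by nlinarith)

end Gaussian

/-- A polynomial is rarely much smaller than its noisy derivative:
`Pr(|p(X)| < ε |D^θ_{Y,Z} p(X)|) = O(d² ε)`. -/
theorem stmt8 :
    ∃ c₀ > (0:ℝ), ∃ C > (0:ℝ),
      ∀ (n d : ℕ) (p : MvPolynomial (Fin n) ℝ), p.totalDegree ≤ d →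
        ∀ ε θ : ℝ, 0 < ε → 0 < θ → θ ≤ c₀ * ε →
          (((stdGaussian n).prod ((stdGaussian n).prod (stdGaussian n)))
            {W | |MvPolynomial.eval W.1 p| <
                  ε * |noisyDeriv θ W.2.1 W.2.2
                        (fun V => MvPolynomial.eval V p) W.1|}).toReal ≤
            C * (d : ℝ) ^ 2 * ε := by
  refine ⟨1, one_pos, 80, by norm_num, fun n d p hp ε θ _ hθ hθε ↦ ?_⟩
  exact stmt8_general (stdGaussian.integral_id n) (MvPolynomial.continuous_eval p).measurable
    (fun x y ↦ (IsTrigPolynomial.eval_cos_smul_add_sin_smul p x y).mono hp) hθ.ne'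
    (by rwa [abs_of_pos hθ, ← one_mul ε])
end

section
/- There exists an absolute constant C > 0 such that the following holds. Let q(X,Y) be a polynomial of degree at most d in the coordinates of (X,Y), and let X, Y, Z be independent standard Gaussian vectors (X on ℝ^{n₁}, Y and Z on ℝ^{n₂}). Then Var_Y( E_X[q(X,Y)²] ) ≤ C^d · E_{X,Y,Z}[(q(X,Y) − q(X,Z))²] · E_{X,Y}[q(X,Y)²]. -/
/-
With `Z` an independent copy of `Y`, `A = q(X, Y) - q(X, Z)` and `B = q(X, Y) + q(X, Z)`, the
variance is `1/2 * E_{Y,Z}[(E_X[q(X, Y)² - q(X, Z)²])²]`, hence by Jensen at most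
`1/2 * E[(A * B)²]`.
Hypercontractivity, `E[f⁴] ≤ 72 ^ d * E[f²]²` for `deg f ≤ d`, decouples `A` and `B` by
Cauchy-Schwarz, and `E[B²] ≤ 4 * E[q²]`.

Hypercontractivity comes from the number operator `N = ∑ i, (X i * ∂ᵢ - ∂ᵢ²)`, for which
`E[f * N g] = ∑ i, E[∂ᵢ f * ∂ᵢ g]`. If every entry of a vector `F` satisfies `N Fᵢ = k Fᵢ`, this
identity applied to `|F|² Fᵢ` and `Fᵢ` gives `k * E|F|⁴ ≤ 3 * E[|F|² |DF|²]`, whence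
`k² * E|F|⁴ ≤ 9 * E|DF|⁴`. The entries of `DF` have eigenvalue `k - 1` and `E|DF|² = k * E|F|²`,
so `E|F|⁴ ≤ 9 ^ k * (E|F|²)²` by induction on `k`. A general polynomial of degree `d` is an
eigenvector of eigenvalue `d` plus an orthogonal polynomial of smaller degree.
-/

open MeasureTheory ProbabilityTheory

section GaussianPolynomial

open MvPolynomial
open scoped NNReal

section GaussianReal

variable {μ : ℝ} {v : ℝ≥0}

lemma integrable_pow_gaussianReal (k : ℕ) : Integrable (fun x => x ^ k) (gaussianReal μ v) := by
  have hnorm := (memLp_id_gaussianReal' (μ := μ) (v := v) k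
    (ENNReal.natCast_ne_top k)).integrable_norm_pow'
  exact hnorm.mono' (by fun_prop) (ae_of_all _ fun x => (norm_pow x k).le)

lemma integrable_gaussianReal_iff (hv : v ≠ 0) {f : ℝ → ℝ} :
    Integrable f (gaussianReal μ v) ↔ Integrable (fun x => f x * gaussianPDFReal μ v x) := by
  rw [gaussianReal_of_var_ne_zero μ hv,
    integrable_withDensity_iff_integrable_smul' (measurable_gaussianPDF μ v)
      (ae_of_all _ fun _ => gaussianPDF_lt_top)]
  simp only [toReal_gaussianPDF, smul_eq_mul, mul_comm]

lemma hasDerivAt_gaussianPDFReal (hv : v ≠ 0) (x : ℝ) :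
    HasDerivAt (gaussianPDFReal μ v) (-((x - μ) / v * gaussianPDFReal μ v x)) x := by
  have hexponent : HasDerivAt (fun y => -(y - μ) ^ 2 / (2 * v)) (-((x - μ) / v)) x := by
    have hsq := (((hasDerivAt_id' x).sub_const μ).pow 2).neg.div_const (2 * (v : ℝ))
    refine hsq.congr_deriv ?_
    push_cast
    field_simp
  refine (hexponent.exp.const_mul (√(2 * Real.pi * v))⁻¹).congr_deriv ?_
  rw [gaussianPDFReal]
  ring

lemma integral_sub_mul_gaussianReal {f f' : ℝ → ℝ} (hf : ∀ x, HasDerivAt f (f' x) x)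
    (hint : Integrable f (gaussianReal μ v)) (hint' : Integrable f' (gaussianReal μ v))
    (hmul : Integrable (fun x => (x - μ) * f x) (gaussianReal μ v)) :
    ∫ x, (x - μ) * f x ∂(gaussianReal μ v) = v * ∫ x, f' x ∂(gaussianReal μ v) := by
  rcases eq_or_ne v 0 with rfl | hv
  · simp
  rw [integrable_gaussianReal_iff hv] at hint hint' hmul
  have hscore (x : ℝ) : f x * -((x - μ) / v * gaussianPDFReal μ v x) =
      -(v : ℝ)⁻¹ * ((x - μ) * f x * gaussianPDFReal μ v x) := by ring
  have hparts := integral_mul_deriv_eq_deriv_mul_of_integrable (fun x _ => hf x)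
    (fun x _ => hasDerivAt_gaussianPDFReal hv x)
    ((hmul.const_mul (-(v : ℝ)⁻¹)).congr (ae_of_all _ fun x => (hscore x).symm)) hint' hint
  simp only [hscore, integral_const_mul] at hparts
  rw [neg_mul, neg_inj] at hparts
  simp only [integral_gaussianReal_eq_integral_smul hv, smul_eq_mul,
    mul_comm (gaussianPDFReal μ v _)]
  rw [← hparts, mul_inv_cancel_left₀ (NNReal.coe_ne_zero.2 hv)]

lemma integral_pow_succ_gaussianReal (k : ℕ) :
    ∫ x, x ^ (k + 1) ∂(gaussianReal 0 v) = v * (k * ∫ x, x ^ (k - 1) ∂(gaussianReal 0 v)) := by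
  have hmul (x : ℝ) : (x - 0) * x ^ k = x ^ (k + 1) := by ring
  have hstein := integral_sub_mul_gaussianReal (μ := 0) (v := v) (hasDerivAt_pow k)
    (integrable_pow_gaussianReal k) ((integrable_pow_gaussianReal (k - 1)).const_mul (k : ℝ))
    (by simpa only [hmul] using integrable_pow_gaussianReal (k + 1))
  simpa only [hmul, integral_const_mul] using hstein

end GaussianReal

section NumberOperator

variable {σ R : Type*} [CommRing R]

lemma pderiv_pderiv_comm (i j : σ) (p : MvPolynomial σ R) :
    pderiv i (pderiv j p) = pderiv j (pderiv i p) := by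
  classical
  have hbracket : ⁅pderiv i, pderiv j⁆ = (0 : Derivation R (MvPolynomial σ R) _) :=
    derivation_ext fun k => by
      rw [Derivation.commutator_apply, pderiv_X, pderiv_X, Pi.single_apply, Pi.single_apply]
      split_ifs <;> simp only [pderiv_one, map_zero, sub_zero, Derivation.zero_apply]
  exact sub_eq_zero.1 (congrArg (fun D => D p) hbracket)

lemma totalDegree_pderiv_le (i : σ) (p : MvPolynomial σ R) :
    (pderiv i p).totalDegree ≤ p.totalDegree - 1 := by
  refine Finset.sup_le fun m hm => ?_
  have hmem : m + Finsupp.single i 1 ∈ p.support := mem_support_iff.2 fun h =>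
    mem_support_iff.1 hm (by rw [coeff_pderiv, h, zero_mul])
  have hle := le_totalDegree hmem
  rw [Finsupp.sum_add_index' (fun _ => rfl) fun _ _ _ => rfl,
    Finsupp.sum_single_index rfl] at hle
  exact Nat.le_sub_of_add_le hle

variable [Fintype σ]

variable (σ R) in
/-- The number operator `∑ i, (X i * ∂ᵢ - ∂ᵢ²)`, the negative of the Ornstein–Uhlenbeck
generator; its eigenvectors are the polynomials whose Hermite expansion is homogeneous. -/
noncomputable def numberOp : Module.End R (MvPolynomial σ R) :=
  ∑ i, (LinearMap.mulLeft R (X i) ∘ₗ (pderiv i).toLinearMap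
    - (pderiv i).toLinearMap ∘ₗ (pderiv i).toLinearMap)

lemma numberOp_apply (p : MvPolynomial σ R) :
    numberOp σ R p = ∑ i, (X i * pderiv i p - pderiv i (pderiv i p)) := by
  simp [numberOp]

lemma numberOp_C (a : R) : numberOp σ R (C a) = 0 := by
  simp [numberOp_apply]

lemma pderiv_numberOp (j : σ) (p : MvPolynomial σ R) :
    pderiv j (numberOp σ R p) = numberOp σ R (pderiv j p) + pderiv j p := by
  classical
  have hterm (i : σ) : pderiv j (X i * pderiv i p - pderiv i (pderiv i p)) =
      (X i * pderiv i (pderiv j p) - pderiv i (pderiv i (pderiv j p))) +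
        (if i = j then pderiv i p else 0) := by
    rw [map_sub, pderiv_mul, pderiv_pderiv_comm j i (pderiv i p), pderiv_pderiv_comm j i p,
      pderiv_X, Pi.single_apply, ite_mul, one_mul, zero_mul]
    ring
  simp only [numberOp_apply, map_sum, hterm, Finset.sum_add_distrib, Finset.sum_ite_eq',
    Finset.mem_univ, if_true]

lemma totalDegree_numberOp_monomial_sub_le (s : σ →₀ ℕ) (a : R) :
    (numberOp σ R (monomial s a) - s.degree • monomial s a).totalDegree ≤ s.degree - 1 := by
  have heuler := (isHomogeneous_monomial (n := s.degree) a rfl).sum_X_mul_pderiv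
  rw [numberOp_apply, Finset.sum_sub_distrib, heuler, sub_sub_cancel_left, totalDegree_neg]
  refine totalDegree_finsetSum_le fun i _ => ?_
  have hdeg : (monomial s a).totalDegree ≤ s.degree := totalDegree_monomial_le s a
  have hi := totalDegree_pderiv_le i (monomial s a)
  have hii := totalDegree_pderiv_le i (pderiv i (monomial s a))
  lia

lemma totalDegree_numberOp_sub_smul_le {p : MvPolynomial σ R} {d : ℕ} (hp : p.totalDegree ≤ d) :
    (numberOp σ R p - d • p).totalDegree ≤ d - 1 := by
  have hterm (s) (hs : s ∈ p.support) :
      (numberOp σ R (monomial s (p.coeff s)) - d • monomial s (p.coeff s)).totalDegree ≤ d - 1 := by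
    have hsd : s.degree ≤ d := (le_totalDegree hs).trans hp
    have hN := totalDegree_numberOp_monomial_sub_le s (p.coeff s)
    rcases hsd.eq_or_lt with rfl | hlt
    · exact hN
    have hsplit : numberOp σ R (monomial s (p.coeff s)) - d • monomial s (p.coeff s) =
        (numberOp σ R (monomial s (p.coeff s)) - s.degree • monomial s (p.coeff s)) +
          monomial s ((s.degree - d : R) * p.coeff s) := by
      simp only [← Nat.cast_smul_eq_nsmul R, ← smul_eq_mul, ← smul_monomial]
      module
    have hmon : (monomial s ((s.degree - d : R) * p.coeff s)).totalDegree ≤ s.degree :=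
      totalDegree_monomial_le ..
    rw [hsplit]
    exact (totalDegree_add _ _).trans (max_le (by lia) (by lia))
  conv_lhs => rw [p.as_sum]
  rw [map_sum, Finset.smul_sum, ← Finset.sum_sub_distrib]
  exact totalDegree_finsetSum_le hterm

end NumberOperator

section Chaos

variable {σ 𝕜 : Type*} [Fintype σ] [Field 𝕜]

variable (σ 𝕜) in
/-- The polynomial part of the `k`-th Gaussian Wiener chaos, encoded without Hermite polynomials as
the eigenspace of the number operator for the eigenvalue `k`. -/
noncomputable abbrev wienerChaos (k : ℕ) : Submodule 𝕜 (MvPolynomial σ 𝕜) :=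
  (numberOp σ 𝕜).eigenspace k

lemma pderiv_mem_wienerChaos {k : ℕ} {p : MvPolynomial σ 𝕜} (hp : p ∈ wienerChaos σ 𝕜 (k + 1))
    (i : σ) : pderiv i p ∈ wienerChaos σ 𝕜 k := by
  rw [Module.End.mem_eigenspace_iff] at hp ⊢
  have hcomm := pderiv_numberOp i p
  rw [hp, Derivation.map_smul, Nat.cast_succ, add_smul, one_smul] at hcomm
  exact (add_right_cancel hcomm).symm

variable [CharZero 𝕜]

lemma totalDegree_le_of_mem_wienerChaos {k : ℕ} {p : MvPolynomial σ 𝕜}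
    (hp : p ∈ wienerChaos σ 𝕜 k) : p.totalDegree ≤ k := by
  rw [Module.End.mem_eigenspace_iff] at hp
  by_contra! hlt
  have hdrop := totalDegree_numberOp_sub_smul_le (le_refl p.totalDegree)
  have hne : (k - p.totalDegree : 𝕜) ≠ 0 := sub_ne_zero.2 (by exact_mod_cast hlt.ne)
  rw [hp, ← Nat.cast_smul_eq_nsmul 𝕜, ← sub_smul] at hdrop
  have hscale := totalDegree_smul_le (k - p.totalDegree : 𝕜)⁻¹ ((k - p.totalDegree : 𝕜) • p)
  rw [inv_smul_smul₀ hne] at hscale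
  lia

-- In each degree `j` the operator `N - k` acts as multiplication by `j - k` up to lower degree.
lemma exists_numberOp_sub_smul_eq {k m : ℕ} (hmk : m < k) :
    ∀ p : MvPolynomial σ 𝕜, p.totalDegree ≤ m →
      ∃ g : MvPolynomial σ 𝕜, g.totalDegree ≤ m ∧ numberOp σ 𝕜 g - k • g = p := by
  induction m with
  | zero =>
    intro p hp
    have hk : (k : 𝕜) ≠ 0 := by exact_mod_cast hmk.ne'
    refine ⟨C (-(k : 𝕜)⁻¹ * p.coeff 0), (totalDegree_C _).le, ?_⟩
    rw [numberOp_C, totalDegree_eq_zero_iff_eq_C.1 (Nat.le_zero.1 hp)]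
    rw [zero_sub, nsmul_eq_mul, ← map_natCast C, ← C_mul, ← C_neg]
    simp [hk]
  | succ m ih =>
    intro p hp
    have hne : ((m + 1 : ℕ) - k : 𝕜) ≠ 0 := sub_ne_zero.2 (by exact_mod_cast hmk.ne)
    set g := ((m + 1 : ℕ) - k : 𝕜)⁻¹ • p with hg
    have hgdeg : g.totalDegree ≤ m + 1 := (totalDegree_smul_le _ _).trans hp
    obtain ⟨h, hhdeg, hh⟩ := ih (by lia) _ (totalDegree_numberOp_sub_smul_le hgdeg)
    refine ⟨g - h, (totalDegree_sub _ _).trans (max_le hgdeg (by lia)), ?_⟩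
    have hp' : p = ((m + 1 : ℕ) - k : 𝕜) • g := by rw [hg, smul_inv_smul₀ hne]
    rw [map_sub, smul_sub, sub_sub_sub_comm, hh, hp']
    simp only [← Nat.cast_smul_eq_nsmul 𝕜]
    module

lemma exists_eq_wienerChaos_add {d : ℕ} {p : MvPolynomial σ 𝕜} (hp : p.totalDegree ≤ d + 1) :
    ∃ u ∈ wienerChaos σ 𝕜 (d + 1), ∃ g : MvPolynomial σ 𝕜, g.totalDegree ≤ d ∧ p = u + g := by
  obtain ⟨g, hg, hNg⟩ := exists_numberOp_sub_smul_eq (Nat.lt_succ_self d) _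
    (totalDegree_numberOp_sub_smul_le hp)
  refine ⟨p - g, ?_, g, hg, (sub_add_cancel p g).symm⟩
  rw [Module.End.mem_eigenspace_iff, Nat.cast_smul_eq_nsmul, map_sub, smul_sub, ← sub_eq_zero,
    sub_sub_sub_comm, hNg, sub_self]

end Chaos

section GaussianMeasure

variable {σ : Type*} [Fintype σ]

variable (σ) in
/-- The standard Gaussian measure on `σ → ℝ`, for an arbitrary finite index type. -/
noncomputable abbrev gaussianPi : Measure (σ → ℝ) :=
  Measure.pi fun _ => gaussianReal 0 1

lemma eval_monomial_eq_prod (m : σ →₀ ℕ) (a : ℝ) (x : σ → ℝ) :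
    eval x (monomial m a) = a * ∏ i, x i ^ m i := by
  rw [eval_monomial, Finsupp.prod_fintype _ _ fun _ => pow_zero _]

lemma integrable_eval_gaussianPi (p : MvPolynomial σ ℝ) :
    Integrable (fun x => eval x p) (gaussianPi σ) := by
  induction p using MvPolynomial.induction_on' with
  | monomial m a =>
    simp only [eval_monomial_eq_prod]
    exact (Integrable.fintype_prod (f := fun i (x : ℝ) => x ^ m i)
      fun i => integrable_pow_gaussianReal (m i)).const_mul a
  | add p q hp hq =>
    simp only [map_add]
    exact hp.add hq

variable (σ) in
/-- The expectation of a polynomial in independent standard Gaussian variables, as a linear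
functional. -/
noncomputable def gaussianExpectation : MvPolynomial σ ℝ →ₗ[ℝ] ℝ where
  toFun p := ∫ x, eval x p ∂(gaussianPi σ)
  map_add' p q := by
    simpa only [map_add] using
      integral_add (integrable_eval_gaussianPi p) (integrable_eval_gaussianPi q)
  map_smul' c p := by
    simp only [smul_eval]
    exact integral_const_mul c _

end GaussianMeasure

local notation "𝔼" => gaussianExpectation _

section Expectation

variable {σ : Type*} [Fintype σ]

lemma gaussianExpectation_apply (p : MvPolynomial σ ℝ) : 𝔼 p = ∫ x, eval x p ∂(gaussianPi σ) :=
  rfl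

lemma gaussianExpectation_C (a : ℝ) : 𝔼 (C a : MvPolynomial σ ℝ) = a := by
  simp [gaussianExpectation_apply]

lemma gaussianExpectation_mono {p q : MvPolynomial σ ℝ} (h : ∀ x, eval x p ≤ eval x q) :
    𝔼 p ≤ 𝔼 q :=
  integral_mono (integrable_eval_gaussianPi p) (integrable_eval_gaussianPi q) h

lemma gaussianExpectation_sq_nonneg (p : MvPolynomial σ ℝ) : 0 ≤ 𝔼 (p ^ 2) :=
  integral_nonneg fun x => (map_pow (eval x) p 2).symm ▸ sq_nonneg (eval x p)

lemma gaussianExpectation_mul_sq_le (p q : MvPolynomial σ ℝ) :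
    𝔼 (p * q) ^ 2 ≤ 𝔼 (p ^ 2) * 𝔼 (q ^ 2) := by
  have hcs := LinearMap.BilinForm.apply_sq_le_of_symm
    ((LinearMap.mul ℝ (MvPolynomial σ ℝ)).compr₂ (gaussianExpectation σ))
    (fun r => by simpa [sq] using gaussianExpectation_sq_nonneg r)
    ⟨fun r s => by simp [mul_comm]⟩ p q
  simpa [sq] using hcs

lemma gaussianExpectation_monomial (m : σ →₀ ℕ) (a : ℝ) :
    𝔼 (monomial m a) = a * ∏ i, ∫ x, x ^ m i ∂(gaussianReal 0 1) := by
  simp only [gaussianExpectation_apply, eval_monomial_eq_prod, integral_const_mul]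
  rw [integral_fintype_prod_eq_prod (f := fun i (x : ℝ) => x ^ m i)]

lemma gaussianExpectation_X_mul (i : σ) (p : MvPolynomial σ ℝ) :
    𝔼 (X i * p) = 𝔼 (pderiv i p) := by
  classical
  induction p using MvPolynomial.induction_on' with
  | add p q hp hq => rw [map_add, map_add, mul_add, map_add, hp, hq]
  | monomial m a =>
    have hsplit (m' : σ →₀ ℕ) (h : ∀ j ≠ i, m' j = m j) (b : ℝ) :
        𝔼 (monomial m' b) = b * ((∫ x, x ^ m' i ∂(gaussianReal 0 1)) *
          ∏ j ∈ Finset.univ.erase i, ∫ x, x ^ m j ∂(gaussianReal 0 1)) := by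
      rw [gaussianExpectation_monomial, ← Finset.mul_prod_erase _ _ (Finset.mem_univ i),
        Finset.prod_congr rfl fun j hj => by rw [h j (Finset.ne_of_mem_erase hj)]]
    have hX : X i * monomial m a = monomial (m + Finsupp.single i 1) a := by
      rw [X, monomial_mul, one_mul, add_comm]
    rw [hX, pderiv_monomial, hsplit _ fun j hj => by simp [hj.symm],
      hsplit _ fun j hj => by simp [hj.symm]]
    simp only [Finsupp.add_apply, Finsupp.tsub_apply, Finsupp.single_eq_same,
      integral_pow_succ_gaussianReal, NNReal.coe_one]
    ring

lemma gaussianExpectation_mul_numberOp (p q : MvPolynomial σ ℝ) :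
    𝔼 (p * numberOp σ ℝ q) = ∑ i, 𝔼 (pderiv i p * pderiv i q) := by
  rw [numberOp_apply, Finset.mul_sum, map_sum]
  refine Finset.sum_congr rfl fun i _ => ?_
  have hstein := gaussianExpectation_X_mul i (p * pderiv i q)
  rw [pderiv_mul, map_add] at hstein
  rw [mul_sub, mul_left_comm, map_sub, hstein, add_sub_cancel_right]

lemma gaussianExpectation_numberOp_mul (p q : MvPolynomial σ ℝ) :
    𝔼 (numberOp σ ℝ p * q) = 𝔼 (p * numberOp σ ℝ q) := by
  simp only [mul_comm (numberOp σ ℝ p), gaussianExpectation_mul_numberOp, mul_comm]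

lemma gaussianExpectation_mul_eq_zero {k : ℕ} {u g : MvPolynomial σ ℝ}
    (hu : u ∈ wienerChaos σ ℝ k) (hg : g.totalDegree < k) : 𝔼 (u * g) = 0 := by
  obtain ⟨h, -, rfl⟩ := exists_numberOp_sub_smul_eq hg g le_rfl
  rw [Module.End.mem_eigenspace_iff] at hu
  rw [mul_sub, map_sub, ← gaussianExpectation_numberOp_mul, hu, ← Nat.cast_smul_eq_nsmul ℝ,
    smul_mul_assoc, mul_smul_comm, sub_self]

end Expectation

section VectorChaos

variable {ι σ R : Type*} [Fintype ι] [CommRing R]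

/-- The squared Euclidean norm of a vector of polynomials. -/
noncomputable def sqNorm (F : ι → MvPolynomial σ R) : MvPolynomial σ R :=
  ∑ i, F i ^ 2

/-- The Jacobian of a vector of polynomials, flattened to a vector indexed by pairs so that
`sqNorm` applies to it and differentiation can be iterated. -/
noncomputable def jacobian (F : ι → MvPolynomial σ R) (a : ι × σ) : MvPolynomial σ R :=
  pderiv a.2 (F a.1)

lemma pderiv_sqNorm (F : ι → MvPolynomial σ R) (j : σ) :
    pderiv j (sqNorm F) = 2 * ∑ i, F i * pderiv j (F i) := by
  simp only [sqNorm, map_sum, pderiv_pow, Finset.mul_sum]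
  simp [mul_assoc]

lemma sum_pderiv_sqNorm_mul_mul_pderiv (F : ι → MvPolynomial σ R) (j : σ) :
    ∑ i, pderiv j (sqNorm F * F i) * pderiv j (F i) =
      2 * (∑ i, F i * pderiv j (F i)) ^ 2 + sqNorm F * ∑ i, pderiv j (F i) ^ 2 := by
  have hterm (i : ι) : pderiv j (sqNorm F * F i) * pderiv j (F i) =
      pderiv j (sqNorm F) * (F i * pderiv j (F i)) + sqNorm F * pderiv j (F i) ^ 2 := by
    rw [pderiv_mul]
    ring
  simp only [hterm, Finset.sum_add_distrib, ← Finset.mul_sum, pderiv_sqNorm]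
  ring

lemma eval_sqNorm (F : ι → MvPolynomial σ ℝ) (x : σ → ℝ) :
    eval x (sqNorm F) = ∑ i, eval x (F i) ^ 2 := by
  simp only [sqNorm, map_sum, map_pow]

variable [Fintype σ]

lemma sqNorm_jacobian (F : ι → MvPolynomial σ R) :
    sqNorm (jacobian F) = ∑ j, ∑ i, pderiv j (F i) ^ 2 :=
  Fintype.sum_prod_type_right _

lemma eval_sum_pderiv_sqNorm_mul_mul_pderiv_le (F : ι → MvPolynomial σ ℝ) (x : σ → ℝ) :
    eval x (∑ j, ∑ i, pderiv j (sqNorm F * F i) * pderiv j (F i)) ≤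
      eval x ((3 : ℝ) • (sqNorm F * sqNorm (jacobian F))) := by
  simp only [sum_pderiv_sqNorm_mul_mul_pderiv, sqNorm_jacobian, smul_eval, Finset.mul_sum, map_sum]
  refine Finset.sum_le_sum fun j _ => ?_
  have hcs := Finset.sum_mul_sq_le_sq_mul_sq Finset.univ (fun i => eval x (F i))
    fun i => eval x (pderiv j (F i))
  rw [← eval_sqNorm] at hcs
  simp only [← Finset.mul_sum, map_add, map_mul, map_pow, map_sum, map_ofNat]
  linarith

variable {F : ι → MvPolynomial σ ℝ} {k : ℕ}

lemma gaussianExpectation_sqNorm_jacobian (hF : ∀ i, F i ∈ wienerChaos σ ℝ k) :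
    𝔼 (sqNorm (jacobian F)) = k * 𝔼 (sqNorm F) := by
  rw [sqNorm_jacobian, Finset.sum_comm]
  simp only [sqNorm, map_sum, Finset.mul_sum]
  refine Finset.sum_congr rfl fun i _ => ?_
  have hi := Module.End.mem_eigenspace_iff.1 (hF i)
  simpa only [hi, mul_smul_comm, map_smul, smul_eq_mul, ← sq, eq_comm] using
    gaussianExpectation_mul_numberOp (F i) (F i)

lemma mul_gaussianExpectation_sqNorm_sq_eq (hF : ∀ i, F i ∈ wienerChaos σ ℝ k) :
    k * 𝔼 (sqNorm F ^ 2) =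
      𝔼 (∑ j, ∑ i, pderiv j (sqNorm F * F i) * pderiv j (F i)) := by
  have hterm (i : ι) : ∑ j, 𝔼 (pderiv j (sqNorm F * F i) * pderiv j (F i)) =
      k * 𝔼 (sqNorm F * F i ^ 2) := by
    rw [← gaussianExpectation_mul_numberOp, Module.End.mem_eigenspace_iff.1 (hF i),
      mul_smul_comm, map_smul, smul_eq_mul, mul_assoc, ← sq]
  simp only [map_sum]
  rw [Finset.sum_comm]
  simp only [hterm]
  rw [← Finset.mul_sum, ← map_sum, ← Finset.mul_sum, sq]
  rfl

lemma mul_gaussianExpectation_sqNorm_sq_le (hF : ∀ i, F i ∈ wienerChaos σ ℝ k) :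
    k * 𝔼 (sqNorm F ^ 2) ≤ 3 * 𝔼 (sqNorm F * sqNorm (jacobian F)) := by
  rw [mul_gaussianExpectation_sqNorm_sq_eq hF, ← smul_eq_mul, ← map_smul]
  exact gaussianExpectation_mono (eval_sum_pderiv_sqNorm_mul_mul_pderiv_le F)

lemma sq_mul_gaussianExpectation_sqNorm_sq_le (hF : ∀ i, F i ∈ wienerChaos σ ℝ k) :
    k ^ 2 * 𝔼 (sqNorm F ^ 2) ≤ 9 * 𝔼 (sqNorm (jacobian F) ^ 2) := by
  have hS := gaussianExpectation_sq_nonneg (sqNorm F)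
  rcases hS.eq_or_lt with hzero | hpos
  · rw [← hzero, mul_zero]
    exact mul_nonneg (by norm_num) (gaussianExpectation_sq_nonneg _)
  refine le_of_mul_le_mul_right ?_ hpos
  calc k ^ 2 * 𝔼 (sqNorm F ^ 2) * 𝔼 (sqNorm F ^ 2)
      = (k * 𝔼 (sqNorm F ^ 2)) ^ 2 := by ring
    _ ≤ (3 * 𝔼 (sqNorm F * sqNorm (jacobian F))) ^ 2 :=
        pow_le_pow_left₀ (by positivity) (mul_gaussianExpectation_sqNorm_sq_le hF) 2
    _ = 9 * 𝔼 (sqNorm F * sqNorm (jacobian F)) ^ 2 := by ring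
    _ ≤ 9 * (𝔼 (sqNorm F ^ 2) * 𝔼 (sqNorm (jacobian F) ^ 2)) :=
        mul_le_mul_of_nonneg_left (gaussianExpectation_mul_sq_le _ _) (by norm_num)
    _ = 9 * 𝔼 (sqNorm (jacobian F) ^ 2) * 𝔼 (sqNorm F ^ 2) := by ring

end VectorChaos

section Hypercontractivity

lemma gaussianExpectation_sq_of_totalDegree_eq_zero {σ : Type*} [Fintype σ]
    {p : MvPolynomial σ ℝ} (hp : p.totalDegree = 0) : 𝔼 (p ^ 2) = 𝔼 p ^ 2 := by
  rw [totalDegree_eq_zero_iff_eq_C.1 hp, ← C_pow, gaussianExpectation_C, gaussianExpectation_C]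

universe u

lemma gaussianExpectation_sqNorm_sq_le {ι σ : Type u} [Fintype ι] [Fintype σ] {k : ℕ}
    {F : ι → MvPolynomial σ ℝ} (hF : ∀ i, F i ∈ wienerChaos σ ℝ k) :
    𝔼 (sqNorm F ^ 2) ≤ 9 ^ k * 𝔼 (sqNorm F) ^ 2 := by
  induction k generalizing ι with
  | zero =>
    have hconst : (sqNorm F).totalDegree = 0 := Nat.le_zero.1 <|
      totalDegree_finsetSum_le fun i _ => (totalDegree_pow (F i) 2).trans <| by
        have := totalDegree_le_of_mem_wienerChaos (hF i)
        lia
    rw [gaussianExpectation_sq_of_totalDegree_eq_zero hconst, pow_zero, one_mul]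
  | succ k ih =>
    have hJ := ih (F := jacobian F) fun a => pderiv_mem_wienerChaos (hF a.1) a.2
    rw [gaussianExpectation_sqNorm_jacobian hF] at hJ
    have hk : (0 : ℝ) < (k + 1 : ℕ) ^ 2 := by positivity
    refine le_of_mul_le_mul_left ?_ hk
    calc ((k + 1 : ℕ) : ℝ) ^ 2 * 𝔼 (sqNorm F ^ 2)
        ≤ 9 * 𝔼 (sqNorm (jacobian F) ^ 2) := sq_mul_gaussianExpectation_sqNorm_sq_le hF
      _ ≤ 9 * (9 ^ k * (((k + 1 : ℕ) : ℝ) * 𝔼 (sqNorm F)) ^ 2) := by gcongr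
      _ = ((k + 1 : ℕ) : ℝ) ^ 2 * (9 ^ (k + 1) * 𝔼 (sqNorm F) ^ 2) := by ring

variable {σ : Type*} [Fintype σ]

lemma gaussianExpectation_pow_four_le_of_mem_wienerChaos {k : ℕ} {u : MvPolynomial σ ℝ}
    (hu : u ∈ wienerChaos σ ℝ k) : 𝔼 (u ^ 4) ≤ 9 ^ k * 𝔼 (u ^ 2) ^ 2 := by
  have hsqNorm : sqNorm (fun _ : PUnit => u) = u ^ 2 := Fintype.sum_unique _
  have hvec := gaussianExpectation_sqNorm_sq_le (F := fun _ : PUnit => u) fun _ => hu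
  rwa [hsqNorm, ← pow_mul] at hvec

lemma gaussianExpectation_add_sq_of_orthogonal {p q : MvPolynomial σ ℝ} (h : 𝔼 (p * q) = 0) :
    𝔼 ((p + q) ^ 2) = 𝔼 (p ^ 2) + 𝔼 (q ^ 2) := by
  have hexpand : (p + q) ^ 2 = p ^ 2 + q ^ 2 + (2 : ℕ) • (p * q) := by ring
  rw [hexpand, map_add, map_add, map_nsmul, h, smul_zero, add_zero]

lemma gaussianExpectation_add_pow_four_le (p q : MvPolynomial σ ℝ) :
    𝔼 ((p + q) ^ 4) ≤ 8 * (𝔼 (p ^ 4) + 𝔼 (q ^ 4)) := by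
  rw [← map_add, ← smul_eq_mul, ← map_smul]
  refine gaussianExpectation_mono fun x => ?_
  simp only [map_pow, map_add, smul_eval]
  have hpow := Even.add_pow_le (a := eval x p) (b := eval x q) (show Even 4 by decide)
  norm_num at hpow
  exact hpow

theorem gaussianExpectation_pow_four_le {d : ℕ} {p : MvPolynomial σ ℝ} (hp : p.totalDegree ≤ d) :
    𝔼 (p ^ 4) ≤ 72 ^ d * 𝔼 (p ^ 2) ^ 2 := by
  induction d generalizing p with
  | zero =>
    have hsq : (p ^ 2).totalDegree = 0 := Nat.le_zero.1 ((totalDegree_pow p 2).trans (by lia))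
    rw [pow_zero, one_mul, ← gaussianExpectation_sq_of_totalDegree_eq_zero hsq, ← pow_mul]
  | succ d ih =>
    obtain ⟨u, hu, g, hg, rfl⟩ := exists_eq_wienerChaos_add hp
    have horth : 𝔼 (u * g) = 0 := gaussianExpectation_mul_eq_zero hu (Nat.lt_succ_of_le hg)
    rw [gaussianExpectation_add_sq_of_orthogonal horth]
    have hu₀ := gaussianExpectation_sq_nonneg u
    have hg₀ := gaussianExpectation_sq_nonneg g
    calc 𝔼 ((u + g) ^ 4)
        ≤ 8 * (𝔼 (u ^ 4) + 𝔼 (g ^ 4)) := gaussianExpectation_add_pow_four_le u g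
      _ ≤ 8 * (9 ^ (d + 1) * 𝔼 (u ^ 2) ^ 2 + 72 ^ d * 𝔼 (g ^ 2) ^ 2) := by
          gcongr
          · exact gaussianExpectation_pow_four_le_of_mem_wienerChaos hu
          · exact ih hg
      _ ≤ 8 * (9 * 72 ^ d * 𝔼 (u ^ 2) ^ 2 + 9 * 72 ^ d * 𝔼 (g ^ 2) ^ 2) := by
          rw [pow_succ']
          gcongr
          · norm_num
          · linarith [pow_pos (show (0 : ℝ) < 72 by norm_num) d]
      _ = 72 ^ (d + 1) * (𝔼 (u ^ 2) ^ 2 + 𝔼 (g ^ 2) ^ 2) := by ring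
      _ ≤ 72 ^ (d + 1) * (𝔼 (u ^ 2) + 𝔼 (g ^ 2)) ^ 2 := by
          gcongr
          nlinarith [mul_nonneg hu₀ hg₀]

lemma gaussianExpectation_mul_sq_le_of_totalDegree_le {d : ℕ} {p q : MvPolynomial σ ℝ}
    (hp : p.totalDegree ≤ d) (hq : q.totalDegree ≤ d) :
    𝔼 ((p * q) ^ 2) ≤ 72 ^ d * (𝔼 (p ^ 2) * 𝔼 (q ^ 2)) := by
  have hp₀ := gaussianExpectation_sq_nonneg p
  have hq₀ := gaussianExpectation_sq_nonneg q
  have hcs := gaussianExpectation_mul_sq_le (p ^ 2) (q ^ 2)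
  rw [← mul_pow, ← pow_mul, ← pow_mul] at hcs
  refine le_of_sq_le_sq ?_ (by positivity)
  calc 𝔼 ((p * q) ^ 2) ^ 2
      ≤ 𝔼 (p ^ 4) * 𝔼 (q ^ 4) := hcs
    _ ≤ (72 ^ d * 𝔼 (p ^ 2) ^ 2) * (72 ^ d * 𝔼 (q ^ 2) ^ 2) :=
        mul_le_mul (gaussianExpectation_pow_four_le hp) (gaussianExpectation_pow_four_le hq)
          (pow_mul q 2 2 ▸ gaussianExpectation_sq_nonneg (q ^ 2)) (by positivity)
    _ = (72 ^ d * (𝔼 (p ^ 2) * 𝔼 (q ^ 2))) ^ 2 := by ring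

end Hypercontractivity

section PartialIntegral

lemma integral_prod_prod {Ω Ω' Ω'' : Type*} [MeasurableSpace Ω] [MeasurableSpace Ω']
    [MeasurableSpace Ω''] {μ : Measure Ω} {ν : Measure Ω'} {ρ : Measure Ω''} [SFinite μ]
    [SFinite ν] [SFinite ρ] {f : Ω × Ω' × Ω'' → ℝ} (hf : Integrable f (μ.prod (ν.prod ρ))) :
    ∫ w, f w ∂(μ.prod (ν.prod ρ)) = ∫ x, ∫ y, ∫ z, f (x, y, z) ∂ρ ∂ν ∂μ := by
  rw [integral_prod _ hf]
  refine integral_congr_ae ?_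
  filter_upwards [hf.prod_right_ae] with x hx
  exact integral_prod _ hx

variable {Ω Ω' : Type*} [MeasurableSpace Ω] [MeasurableSpace Ω'] {μ : Measure Ω} {ν : Measure Ω'}
  [IsProbabilityMeasure μ]

lemma sq_integral_le_integral_sq {f : Ω → ℝ} (hf : MemLp f 2 μ) :
    (∫ x, f x ∂μ) ^ 2 ≤ ∫ x, f x ^ 2 ∂μ :=
  sub_nonneg.1 (variance_eq_sub hf ▸ variance_nonneg f μ)

lemma variance_eq_half_integral_sub_sq {f : Ω → ℝ} (hf : MemLp f 2 μ) :
    Var[f; μ] = 1 / 2 * ∫ w : Ω × Ω, (f w.1 - f w.2) ^ 2 ∂(μ.prod μ) := by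
  have hint : Integrable f μ := hf.integrable one_le_two
  have hadd := variance_add_prod hf hf.neg
  have hmean : ∫ w : Ω × Ω, (f w.1 + (-f) w.2) ∂(μ.prod μ) = 0 := by
    rw [integral_add (hint.comp_fst μ) (hint.neg.comp_snd μ), integral_fun_fst,
      integral_fun_snd (-f)]
    simp [integral_neg]
  have hvar : Var[fun w : Ω × Ω => f w.1 + (-f) w.2; μ.prod μ] =
      ∫ w : Ω × Ω, (f w.1 + (-f) w.2) ^ 2 ∂(μ.prod μ) := variance_of_integral_eq_zero
    ((hf.comp_fst μ).add (hf.neg.comp_snd μ)).aestronglyMeasurable.aemeasurable hmean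
  rw [hvar, variance_neg] at hadd
  simp only [Pi.neg_apply, ← sub_eq_add_neg] at hadd
  linarith

variable [IsFiniteMeasure ν] {h : Ω × Ω' → ℝ}

lemma ae_sq_integral_le_integral_sq (hh : MemLp h 2 (μ.prod ν)) :
    ∀ᵐ y ∂ν, (∫ x, h (x, y) ∂μ) ^ 2 ≤ ∫ x, h (x, y) ^ 2 ∂μ := by
  filter_upwards [(hh.integrable one_le_two).prod_left_ae, hh.integrable_sq.prod_left_ae]
    with y hint hsq
  exact sq_integral_le_integral_sq
    ((memLp_two_iff_integrable_sq hint.aestronglyMeasurable).2 hsq)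

lemma memLp_two_integral_fst (hh : MemLp h 2 (μ.prod ν)) :
    MemLp (fun y => ∫ x, h (x, y) ∂μ) 2 ν := by
  have hmeas := (hh.integrable one_le_two).integral_prod_right.aestronglyMeasurable
  refine (memLp_two_iff_integrable_sq hmeas).2 (hh.integrable_sq.integral_prod_right.mono'
    (hmeas.pow 2) ?_)
  filter_upwards [ae_sq_integral_le_integral_sq hh] with y hy
  rwa [Real.norm_of_nonneg (sq_nonneg _)]

lemma integral_sq_integral_fst_le (hh : MemLp h 2 (μ.prod ν)) :
    ∫ y, (∫ x, h (x, y) ∂μ) ^ 2 ∂ν ≤ ∫ w, h w ^ 2 ∂(μ.prod ν) := by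
  rw [integral_prod_symm _ hh.integrable_sq]
  exact integral_mono_ae (memLp_two_integral_fst hh).integrable_sq
    hh.integrable_sq.integral_prod_right (ae_sq_integral_le_integral_sq hh)

lemma variance_integral_fst_le {ν : Measure Ω'} [IsProbabilityMeasure ν]
    (hh : MemLp h 2 (μ.prod ν)) :
    Var[fun y => ∫ x, h (x, y) ∂μ; ν] ≤
      1 / 2 * ∫ w : Ω × Ω' × Ω', (h (w.1, w.2.1) - h (w.1, w.2.2)) ^ 2 ∂(μ.prod (ν.prod ν)) := by
  have hfst : MemLp (fun w : Ω × Ω' × Ω' => h (w.1, w.2.1)) 2 (μ.prod (ν.prod ν)) :=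
    hh.comp_measurePreserving ((MeasurePreserving.id μ).prod measurePreserving_fst)
  have hsnd : MemLp (fun w : Ω × Ω' × Ω' => h (w.1, w.2.2)) 2 (μ.prod (ν.prod ν)) :=
    hh.comp_measurePreserving ((MeasurePreserving.id μ).prod measurePreserving_snd)
  have hsub : ∀ᵐ y : Ω' × Ω' ∂(ν.prod ν), ((∫ x, h (x, y.1) ∂μ) - ∫ x, h (x, y.2) ∂μ) ^ 2 =
      (∫ x, (h (x, y.1) - h (x, y.2)) ∂μ) ^ 2 := by
    filter_upwards [(hfst.integrable one_le_two).prod_left_ae,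
      (hsnd.integrable one_le_two).prod_left_ae] with y hy₁ hy₂
    rw [integral_sub hy₁ hy₂]
  rw [variance_eq_half_integral_sub_sq (memLp_two_integral_fst hh), integral_congr_ae hsub]
  gcongr
  exact integral_sq_integral_fst_le (hfst.sub hsnd)

end PartialIntegral

section Replica

variable {α β R : Type*} [CommSemiring R]

/-- The polynomial `q(X, Y)` as a polynomial in `(X, Y, Z)`, where `Z` is a second copy of the
variables `Y`. -/
noncomputable def fstReplica (q : MvPolynomial (α ⊕ β) R) : MvPolynomial (α ⊕ β ⊕ β) R :=
  rename (Sum.map id Sum.inl) q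

/-- The polynomial `q(X, Z)` as a polynomial in `(X, Y, Z)`, where `Z` is a second copy of the
variables `Y`. -/
noncomputable def sndReplica (q : MvPolynomial (α ⊕ β) R) : MvPolynomial (α ⊕ β ⊕ β) R :=
  rename (Sum.map id Sum.inr) q

lemma eval_fstReplica (q : MvPolynomial (α ⊕ β) R) (x : α → R) (y z : β → R) :
    eval (Sum.elim x (Sum.elim y z)) (fstReplica q) = eval (Sum.elim x y) q := by
  rw [fstReplica, eval_rename, Sum.elim_comp_map, Sum.elim_comp_inl, Function.comp_id]

lemma eval_sndReplica (q : MvPolynomial (α ⊕ β) R) (x : α → R) (y z : β → R) :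
    eval (Sum.elim x (Sum.elim y z)) (sndReplica q) = eval (Sum.elim x z) q := by
  rw [sndReplica, eval_rename, Sum.elim_comp_map, Sum.elim_comp_inr, Function.comp_id]

lemma fstReplica_eq_sndReplica {q : MvPolynomial (α ⊕ β) R} (hq : q.totalDegree = 0) :
    fstReplica q = sndReplica q := by
  rw [totalDegree_eq_zero_iff_eq_C.1 hq, fstReplica, sndReplica, rename_C, rename_C]

end Replica

section Variance

lemma integrable_eval_of_measurePreserving {σ Ω : Type*} [Fintype σ] [MeasurableSpace Ω]
    {μ : Measure Ω} {φ : Ω → σ → ℝ} (hφ : MeasurePreserving φ μ (gaussianPi σ))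
    (p : MvPolynomial σ ℝ) : Integrable (fun w => eval (φ w) p) μ :=
  hφ.integrable_comp_of_integrable (integrable_eval_gaussianPi p)

lemma gaussianExpectation_eq_of_measurePreserving {σ Ω : Type*} [Fintype σ] [MeasurableSpace Ω]
    {μ : Measure Ω} {φ : Ω → σ → ℝ} (hφ : MeasurePreserving φ μ (gaussianPi σ))
    (p : MvPolynomial σ ℝ) : 𝔼 p = ∫ w, eval (φ w) p ∂μ := by
  rw [gaussianExpectation_apply, ← hφ.map_eq, integral_map hφ.aemeasurable
    p.continuous_eval.aestronglyMeasurable]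

variable {α β γ : Type*} [Fintype α] [Fintype β] [Fintype γ]

lemma measurePreserving_sumElim :
    MeasurePreserving (fun w : (α → ℝ) × (β → ℝ) => Sum.elim w.1 w.2)
      ((gaussianPi α).prod (gaussianPi β)) (gaussianPi (α ⊕ β)) := by
  convert measurePreserving_sumPiEquivProdPi_symm (X := fun _ : α ⊕ β => ℝ)
    (fun _ => gaussianReal 0 1) using 1
  ext w (i | i) <;> rfl

lemma measurePreserving_sumElim_sumElim :
    MeasurePreserving
      (fun w : (α → ℝ) × (β → ℝ) × (γ → ℝ) => Sum.elim w.1 (Sum.elim w.2.1 w.2.2))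
      ((gaussianPi α).prod ((gaussianPi β).prod (gaussianPi γ))) (gaussianPi (α ⊕ β ⊕ γ)) :=
  measurePreserving_sumElim.comp
    ((MeasurePreserving.id (gaussianPi α)).prod measurePreserving_sumElim)

lemma gaussianExpectation_sum_sum (p : MvPolynomial (α ⊕ β ⊕ γ) ℝ) :
    𝔼 p = ∫ x, ∫ y, ∫ z, eval (Sum.elim x (Sum.elim y z)) p
      ∂(gaussianPi γ) ∂(gaussianPi β) ∂(gaussianPi α) := by
  rw [gaussianExpectation_eq_of_measurePreserving measurePreserving_sumElim_sumElim,
    integral_prod_prod (integrable_eval_of_measurePreserving measurePreserving_sumElim_sumElim p)]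

lemma gaussianExpectation_fstReplica_sq (q : MvPolynomial (α ⊕ β) ℝ) :
    𝔼 (fstReplica q ^ 2) =
      ∫ x, ∫ y, eval (Sum.elim x y) q ^ 2 ∂(gaussianPi β) ∂(gaussianPi α) := by
  simp [gaussianExpectation_sum_sum, eval_fstReplica]

lemma gaussianExpectation_sndReplica_sq (q : MvPolynomial (α ⊕ β) ℝ) :
    𝔼 (sndReplica q ^ 2) =
      ∫ x, ∫ y, eval (Sum.elim x y) q ^ 2 ∂(gaussianPi β) ∂(gaussianPi α) := by
  simp [gaussianExpectation_sum_sum, eval_sndReplica]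

lemma gaussianExpectation_fstReplica_sub_sndReplica_sq (q : MvPolynomial (α ⊕ β) ℝ) :
    𝔼 ((fstReplica q - sndReplica q) ^ 2) =
      ∫ x, ∫ y, ∫ z, (eval (Sum.elim x y) q - eval (Sum.elim x z) q) ^ 2
        ∂(gaussianPi β) ∂(gaussianPi β) ∂(gaussianPi α) := by
  simp only [gaussianExpectation_sum_sum, map_pow, map_sub, eval_fstReplica, eval_sndReplica]

lemma gaussianExpectation_fstReplica_add_sndReplica_sq_le (q : MvPolynomial (α ⊕ β) ℝ) :
    𝔼 ((fstReplica q + sndReplica q) ^ 2) ≤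
      4 * ∫ x, ∫ y, eval (Sum.elim x y) q ^ 2 ∂(gaussianPi β) ∂(gaussianPi α) := by
  calc 𝔼 ((fstReplica q + sndReplica q) ^ 2)
      ≤ 𝔼 ((2 : ℝ) • (fstReplica q ^ 2 + sndReplica q ^ 2)) :=
        gaussianExpectation_mono fun x => by
          simpa only [map_pow, map_add, smul_eval] using add_sq_le
    _ = 4 * ∫ x, ∫ y, eval (Sum.elim x y) q ^ 2 ∂(gaussianPi β) ∂(gaussianPi α) := by
        rw [map_smul, map_add, gaussianExpectation_fstReplica_sq,
          gaussianExpectation_sndReplica_sq, smul_eq_mul]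
        ring

lemma variance_integral_eval_sq_le (q : MvPolynomial (α ⊕ β) ℝ) :
    Var[fun y => ∫ x, eval (Sum.elim x y) q ^ 2 ∂(gaussianPi α); gaussianPi β] ≤
      1 / 2 * 𝔼 (((fstReplica q - sndReplica q) * (fstReplica q + sndReplica q)) ^ 2) := by
  have hsq := integrable_eval_of_measurePreserving (measurePreserving_sumElim (α := α) (β := β))
    (q ^ 2)
  have hfour := integrable_eval_of_measurePreserving
    (measurePreserving_sumElim (α := α) (β := β)) ((q ^ 2) ^ 2)
  simp only [map_pow] at hsq hfour
  refine (variance_integral_fst_le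
    ((memLp_two_iff_integrable_sq hsq.aestronglyMeasurable).2 hfour)).trans_eq ?_
  rw [gaussianExpectation_eq_of_measurePreserving measurePreserving_sumElim_sumElim]
  simp only [map_pow, map_mul, map_sub, map_add, eval_fstReplica, eval_sndReplica, sq_sub_sq,
    mul_comm]

lemma variance_integral_eval_sq_le_of_totalDegree_le {q : MvPolynomial (α ⊕ β) ℝ} {d : ℕ}
    (hq : q.totalDegree ≤ d) :
    Var[fun y => ∫ x, eval (Sum.elim x y) q ^ 2 ∂(gaussianPi α); gaussianPi β] ≤
      2 * 72 ^ d * 𝔼 ((fstReplica q - sndReplica q) ^ 2) *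
        ∫ x, ∫ y, eval (Sum.elim x y) q ^ 2 ∂(gaussianPi β) ∂(gaussianPi α) := by
  have hfst : (fstReplica q).totalDegree ≤ d := (totalDegree_rename_le _ _).trans hq
  have hsnd : (sndReplica q).totalDegree ≤ d := (totalDegree_rename_le _ _).trans hq
  have hsub := (totalDegree_sub (fstReplica q) (sndReplica q)).trans (max_le hfst hsnd)
  have hadd := (totalDegree_add (fstReplica q) (sndReplica q)).trans (max_le hfst hsnd)
  have hnonneg := gaussianExpectation_sq_nonneg (fstReplica q - sndReplica q)
  calc Var[fun y => ∫ x, eval (Sum.elim x y) q ^ 2 ∂(gaussianPi α); gaussianPi β]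
      ≤ 1 / 2 * 𝔼 (((fstReplica q - sndReplica q) * (fstReplica q + sndReplica q)) ^ 2) :=
        variance_integral_eval_sq_le q
    _ ≤ 1 / 2 * (72 ^ d * (𝔼 ((fstReplica q - sndReplica q) ^ 2) *
          𝔼 ((fstReplica q + sndReplica q) ^ 2))) := by
        gcongr
        exact gaussianExpectation_mul_sq_le_of_totalDegree_le hsub hadd
    _ ≤ 1 / 2 * (72 ^ d * (𝔼 ((fstReplica q - sndReplica q) ^ 2) *
          (4 * ∫ x, ∫ y, eval (Sum.elim x y) q ^ 2 ∂(gaussianPi β) ∂(gaussianPi α)))) := by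
        gcongr
        exact gaussianExpectation_fstReplica_add_sndReplica_sq_le q
    _ = 2 * 72 ^ d * 𝔼 ((fstReplica q - sndReplica q) ^ 2) *
          ∫ x, ∫ y, eval (Sum.elim x y) q ^ 2 ∂(gaussianPi β) ∂(gaussianPi α) := by ring

theorem stmt11_general {q : MvPolynomial (α ⊕ β) ℝ} {d : ℕ} (hq : q.totalDegree ≤ d) :
    Var[fun y => ∫ x, eval (Sum.elim x y) q ^ 2 ∂(gaussianPi α); gaussianPi β] ≤
      144 ^ d *
        (∫ x, ∫ y, ∫ z, (eval (Sum.elim x y) q - eval (Sum.elim x z) q) ^ 2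
          ∂(gaussianPi β) ∂(gaussianPi β) ∂(gaussianPi α)) *
        ∫ x, ∫ y, eval (Sum.elim x y) q ^ 2 ∂(gaussianPi β) ∂(gaussianPi α) := by
  rw [← gaussianExpectation_fstReplica_sub_sndReplica_sq, ← gaussianExpectation_fstReplica_sq]
  have hvar := variance_integral_eval_sq_le_of_totalDegree_le hq
  rw [← gaussianExpectation_fstReplica_sq] at hvar
  refine hvar.trans ?_
  have hQ := gaussianExpectation_sq_nonneg (fstReplica q)
  have hA := gaussianExpectation_sq_nonneg (fstReplica q - sndReplica q)
  rcases Nat.eq_zero_or_pos d with rfl | hd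
  · rw [fstReplica_eq_sndReplica (Nat.le_zero.1 hq), sub_self]
    simp
  · have hconst : (2 : ℝ) * 72 ^ d ≤ 144 ^ d :=
      calc (2 : ℝ) * 72 ^ d ≤ 2 ^ d * 72 ^ d := by
            gcongr
            exact le_self_pow₀ one_le_two hd.ne'
        _ = 144 ^ d := by
            rw [← mul_pow]
            norm_num
    exact mul_le_mul_of_nonneg_right (mul_le_mul_of_nonneg_right hconst hA) hQ

end Variance

end GaussianPolynomial

/-- Variance bound for partial square averages of a polynomial:
`Var_Y(E_X[q(X,Y)²]) ≤ C^d E[(q(X,Y)−q(X,Z))²] E[q(X,Y)²]`. -/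
theorem stmt11 :
    ∃ C > (0:ℝ),
      ∀ (n₁ n₂ d : ℕ) (q : MvPolynomial (Fin n₁ ⊕ Fin n₂) ℝ), q.totalDegree ≤ d →
        variance (fun Y => ∫ X, (MvPolynomial.eval (Sum.elim X Y) q) ^ 2 ∂(stdGaussian n₁))
            (stdGaussian n₂) ≤
          C ^ d *
            (∫ X, ∫ Y, ∫ Z, (MvPolynomial.eval (Sum.elim X Y) q -
                MvPolynomial.eval (Sum.elim X Z) q) ^ 2
              ∂(stdGaussian n₂) ∂(stdGaussian n₂) ∂(stdGaussian n₁)) *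
            (∫ X, ∫ Y, (MvPolynomial.eval (Sum.elim X Y) q) ^ 2
              ∂(stdGaussian n₂) ∂(stdGaussian n₁)) := by
  exact ⟨144, by norm_num, fun _ _ _ _ hq => stmt11_general hq⟩
end

section
/- There exists a constant C > 1 such that for every positive integer d there exists θ₀(d) > 0 with the following property: for every real θ with 0 < θ ≤ θ₀(d), there exist real numbers c_0, c_1, …, c_{4d+1} with C^{−d} ≤ |c_m| ≤ C^d for every m and Σ_{m=0}^{4d+1} c_m = 0, such that for every polynomial p of degree at most d on ℝ^n, every X ∈ ℝ^n, and every nonnegative integer ℓ, Σ_{m=0}^{4d+1} c_m · |p_θ^{(ℓ),m}(X)|_2² = 0. -/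
open MeasureTheory ProbabilityTheory

/-!
Averaging multiplies the leading part of a polynomial of degree `k` by `cos θ ^ k` and changes only
terms of lower degree. On polynomials of degree at most `2d`, such as `|p_θ^{(ℓ)}|₂²`, the operator
`A^θ` is therefore triangular with eigenvalues `1, cos θ, …, cos θ ^ (2d)`, so it is annihilated by
`(x - 1) ^ (2d) * ∏_{j ≤ 2d} (x - cos θ ^ j)`. The coefficients of this polynomial are the desired
`c_m`: they sum to its value `0` at `x = 1`, and as `θ → 0` they tend to those of
`(x - 1) ^ (4d + 1)`, whose absolute values are binomial coefficients, between `1` and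
`2 ^ (4d + 1) < 64 ^ d`.
-/

section Degree

open MvPolynomial

variable {σ R S : Type*} [CommRing R] [CommRing S]

/-- The polynomials all of whose monomials have degree less than `k`. Unlike a bound on
`MvPolynomial.totalDegree`, it singles out the zero polynomial when `k = 0`. -/
noncomputable def totalDegreeLT (σ R : Type*) [CommRing R] (k : ℕ) :
    Submodule R (MvPolynomial σ R) :=
  restrictSupport R {α | α.degree < k}

theorem mem_totalDegreeLT {k : ℕ} {p : MvPolynomial σ R} :
    p ∈ totalDegreeLT σ R k ↔ ∀ α, k ≤ α.degree → coeff α p = 0 := by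
  simp only [totalDegreeLT, mem_restrictSupport_iff, Set.subset_def, Finset.mem_coe,
    mem_support_iff, Set.mem_ofPred_eq, ne_eq, ← not_le, not_imp_not]

theorem mem_totalDegreeLT_succ {k : ℕ} {p : MvPolynomial σ R} :
    p ∈ totalDegreeLT σ R (k + 1) ↔ p.totalDegree ≤ k := by
  simp only [totalDegreeLT, Nat.lt_succ_iff]
  exact mem_restrictTotalDegree σ k p

theorem totalDegreeLT_zero : totalDegreeLT σ R 0 = ⊥ := by
  refine eq_bot_iff.2 fun p hp => (Submodule.mem_bot R).2 (MvPolynomial.ext _ _ fun α => ?_)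
  rw [mem_totalDegreeLT.1 hp α (Nat.zero_le _), coeff_zero]

theorem totalDegreeLT_mono : Monotone (totalDegreeLT σ R) := fun _ _ hjk =>
  restrictSupport_mono R fun _ hα => lt_of_lt_of_le hα hjk

theorem monomial_mem_totalDegreeLT {k : ℕ} {α : σ →₀ ℕ} (hα : α.degree < k) (r : R) :
    monomial α r ∈ totalDegreeLT σ R k :=
  (monomial_mem_restrictSupport R).2 (Or.inl hα)

theorem mul_mem_totalDegreeLT {j k : ℕ} {p q : MvPolynomial σ R}
    (hp : p ∈ totalDegreeLT σ R (j + 1)) (hq : q ∈ totalDegreeLT σ R k) :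
    p * q ∈ totalDegreeLT σ R (j + k) := by
  have hpq := Submodule.mul_mem_mul hp hq
  rw [totalDegreeLT, totalDegreeLT, ← restrictSupport_add] at hpq
  refine restrictSupport_mono R ?_ hpq
  rintro _ ⟨α, hα, β, hβ, rfl⟩
  simp only [Set.mem_ofPred_eq, map_add] at hα hβ ⊢
  omega

theorem map_mem_totalDegreeLT (f : R →+* S) {k : ℕ} {p : MvPolynomial σ R}
    (hp : p ∈ totalDegreeLT σ R k) : map f p ∈ totalDegreeLT σ S k :=
  mem_totalDegreeLT.2 fun α hα => by rw [coeff_map, mem_totalDegreeLT.1 hp α hα, map_zero]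

end Degree

section ScaleTranslate

open MvPolynomial

variable {σ R A S B : Type*} [CommRing R] [CommRing A] [Algebra R A]

/-- The substitution `x ↦ c • x + b` in polynomials over `R`, where the scalar `c` and the vector
`b` have entries in an `R`-algebra `A`. -/
noncomputable def scaleTranslate (c : A) (b : σ → A) : MvPolynomial σ R →ₐ[R] MvPolynomial σ A :=
  aeval fun i => C c * X i + C (b i)

theorem aevalTower_scaleTranslate [CommRing S] [Algebra S R] [Algebra S A] [IsScalarTower S R A]
    [CommRing B] [Algebra S B] (e : A →ₐ[S] B) (x : σ → B) (c : A) (b : σ → A)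
    (p : MvPolynomial σ R) :
    aevalTower e x (scaleTranslate c b p) =
      aevalTower (e.comp (IsScalarTower.toAlgHom S R A)) (fun i => e c * x i + e (b i)) p := by
  induction p using MvPolynomial.induction_on with
  | C r => simp [scaleTranslate, MvPolynomial.algebraMap_apply]
  | add p q hp hq => rw [map_add, map_add, hp, hq, map_add]
  | mul_X p i hp => rw [map_mul, map_mul, hp, map_mul]; simp [scaleTranslate]

theorem scaleTranslate_mem_totalDegreeLT_succ {c : A} {b : σ → A} {k : ℕ} {p : MvPolynomial σ R}
    (hp : p ∈ totalDegreeLT σ R (k + 1))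
    (h : scaleTranslate c b p - c ^ k • map (algebraMap R A) p ∈ totalDegreeLT σ A k) :
    scaleTranslate c b p ∈ totalDegreeLT σ A (k + 1) :=
  (Submodule.sub_mem_iff_left _ (Submodule.smul_mem _ _ (map_mem_totalDegreeLT _ hp))).1
    (totalDegreeLT_mono (Nat.le_succ k) h)

theorem scaleTranslate_mul_sub_smul_map_mem {c : A} {b : σ → A} {j k : ℕ} {p q : MvPolynomial σ R}
    (hp : p ∈ totalDegreeLT σ R (j + 1)) (hq : q ∈ totalDegreeLT σ R (k + 1))
    (hp' : scaleTranslate c b p - c ^ j • map (algebraMap R A) p ∈ totalDegreeLT σ A j)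
    (hq' : scaleTranslate c b q - c ^ k • map (algebraMap R A) q ∈ totalDegreeLT σ A k) :
    scaleTranslate c b (p * q) - c ^ (j + k) • map (algebraMap R A) (p * q) ∈
      totalDegreeLT σ A (j + k) := by
  have hsplit : scaleTranslate c b (p * q) - c ^ (j + k) • map (algebraMap R A) (p * q) =
      scaleTranslate c b p * (scaleTranslate c b q - c ^ k • map (algebraMap R A) q) +
        c ^ k • (map (algebraMap R A) q *
          (scaleTranslate c b p - c ^ j • map (algebraMap R A) p)) := by
    simp only [map_mul, smul_eq_C_mul, pow_add]
    ring
  rw [hsplit]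
  refine add_mem (mul_mem_totalDegreeLT (scaleTranslate_mem_totalDegreeLT_succ hp hp') hq')
    (Submodule.smul_mem _ _ ?_)
  rw [add_comm j]
  exact mul_mem_totalDegreeLT (map_mem_totalDegreeLT _ hq) hp'

theorem scaleTranslate_monomial_sub_smul_mem (c : A) (b : σ → A) (α : σ →₀ ℕ) :
    scaleTranslate c b (monomial α (1 : R)) -
      c ^ α.degree • map (algebraMap R A) (monomial α 1) ∈ totalDegreeLT σ A α.degree := by
  have hadd (α β : σ →₀ ℕ)
      (hα : scaleTranslate c b (monomial α (1 : R)) -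
        c ^ α.degree • map (algebraMap R A) (monomial α 1) ∈ totalDegreeLT σ A α.degree)
      (hβ : scaleTranslate c b (monomial β (1 : R)) -
        c ^ β.degree • map (algebraMap R A) (monomial β 1) ∈ totalDegreeLT σ A β.degree) :
      scaleTranslate c b (monomial (α + β) (1 : R)) -
        c ^ (α + β).degree • map (algebraMap R A) (monomial (α + β) 1) ∈
          totalDegreeLT σ A (α + β).degree := by
    rw [map_add, ← one_mul (1 : R), ← monomial_mul]
    exact scaleTranslate_mul_sub_smul_map_mem (monomial_mem_totalDegreeLT (Nat.lt_succ_self _) 1)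
      (monomial_mem_totalDegreeLT (Nat.lt_succ_self _) 1) hα hβ
  induction α using Finsupp.induction_linear with
  | zero => simp
  | add α β hα hβ => exact hadd α β hα hβ
  | single i m =>
    induction m with
    | zero => simp
    | succ m ih =>
      rw [Finsupp.single_add]
      refine hadd _ _ ih ?_
      have hX : scaleTranslate c b (X i : MvPolynomial σ R) - c • map (algebraMap R A) (X i) =
          monomial 0 (b i) := by
        simp [scaleTranslate, smul_eq_C_mul]
      change scaleTranslate c b (X i : MvPolynomial σ R) - _ • map (algebraMap R A) (X i) ∈ _
      rw [Finsupp.degree_single, pow_one, hX]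
      exact monomial_mem_totalDegreeLT (by simp) _

theorem scaleTranslate_sub_smul_map_mem (c : A) (b : σ → A) {k : ℕ} {p : MvPolynomial σ R}
    (hp : p ∈ totalDegreeLT σ R (k + 1)) :
    scaleTranslate c b p - c ^ k • map (algebraMap R A) p ∈ totalDegreeLT σ A k := by
  rw [totalDegreeLT, restrictSupport_eq_span] at hp
  induction hp using Submodule.span_induction with
  | zero => simp
  | add p q _ _ hp hq =>
    rw [map_add, map_add, smul_add, add_sub_add_comm]
    exact add_mem hp hq
  | smul r p _ hp =>
    have hr : scaleTranslate c b (r • p) - c ^ k • map (algebraMap R A) (r • p) =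
        algebraMap R A r • (scaleTranslate c b p - c ^ k • map (algebraMap R A) p) := by
      have hmap : map (algebraMap R A) (r • p) = algebraMap R A r • map (algebraMap R A) p := by
        simp only [smul_eq_C_mul, map_mul, map_C]
      rw [map_smul, hmap, smul_sub, smul_comm _ (c ^ k), algebraMap_smul, algebraMap_smul]
    rw [hr]
    exact Submodule.smul_mem _ _ hp
  | mem p hp =>
    obtain ⟨α, hα, rfl⟩ := hp
    have hlead := scaleTranslate_monomial_sub_smul_mem (R := R) c b α
    rcases Nat.lt_succ_iff_lt_or_eq.1 hα with hlt | rfl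
    · refine sub_mem (totalDegreeLT_mono hlt (scaleTranslate_mem_totalDegreeLT_succ
        (monomial_mem_totalDegreeLT (Nat.lt_succ_self _) 1) hlead)) (Submodule.smul_mem _ _ ?_)
      exact map_mem_totalDegreeLT _ (monomial_mem_totalDegreeLT hlt 1)
    · exact hlead

end ScaleTranslate

section MapCoeffs

open MvPolynomial

variable {σ R A B : Type*} [CommRing R] [CommRing A] [Algebra R A] [CommRing B] [Algebra R B]

/-- The action of a linear map on the coefficients of a polynomial; `MvPolynomial.map` is the
multiplicative counterpart. -/
noncomputable def mapCoeffs (φ : A →ₗ[R] B) : MvPolynomial σ A →ₗ[R] MvPolynomial σ B :=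
  (AddMonoidAlgebra.coeffLinearEquiv R).symm.toLinearMap ∘ₗ
    Finsupp.mapRange.linearMap φ ∘ₗ (AddMonoidAlgebra.coeffLinearEquiv R).toLinearMap

theorem coeff_mapCoeffs (φ : A →ₗ[R] B) (p : MvPolynomial σ A) (α : σ →₀ ℕ) :
    coeff α (mapCoeffs φ p) = φ (coeff α p) := rfl

theorem mapCoeffs_monomial (φ : A →ₗ[R] B) (α : σ →₀ ℕ) (a : A) :
    mapCoeffs φ (monomial α a) = monomial α (φ a) := by
  classical
  ext β
  rw [coeff_mapCoeffs, coeff_monomial, coeff_monomial, apply_ite φ, map_zero]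

theorem mapCoeffs_mem_totalDegreeLT (φ : A →ₗ[R] B) {k : ℕ} {p : MvPolynomial σ A}
    (hp : p ∈ totalDegreeLT σ A k) : mapCoeffs φ p ∈ totalDegreeLT σ B k :=
  mem_totalDegreeLT.2 fun α hα => by
    rw [coeff_mapCoeffs, mem_totalDegreeLT.1 hp α hα, map_zero]

end MapCoeffs

section PolyExpect

open MvPolynomial

variable {Ω Ω' κ κ' σ : Type*} [MeasurableSpace Ω] [MeasurableSpace Ω']
  {μ : Measure Ω} {ν : Measure Ω'} {y : Ω → κ → ℝ} {z : Ω' → κ' → ℝ}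
  {R : Type*} [CommRing R] [Algebra ℝ R]

/-- All joint moments of the coordinates of the random vector `y` exist. -/
def HasJointMoments (y : Ω → κ → ℝ) (μ : Measure Ω) : Prop :=
  ∀ β : κ →₀ ℕ, Integrable (fun ω => β.prod fun i m => y ω i ^ m) μ

theorem HasJointMoments.sumElim [SFinite μ] [SFinite ν] (hy : HasJointMoments y μ)
    (hz : HasJointMoments z ν) :
    HasJointMoments (fun ω : Ω × Ω' => Sum.elim (y ω.1) (z ω.2)) (μ.prod ν) := by
  intro β
  rw [← Finsupp.comapDomain_sumElim_comapDomain β]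
  simp only [Finsupp.prod_sumElim]
  exact (hy _).mul_prod (hz _)

/-- The expectation of a polynomial in the random vector `y`, the coefficients being treated as
constants. -/
noncomputable def polyExpect (R : Type*) [CommRing R] [Algebra ℝ R] (y : Ω → κ → ℝ)
    (μ : Measure Ω) : MvPolynomial κ R →ₗ[R] R :=
  (basisMonomials κ R).constr R fun β =>
    algebraMap ℝ R (∫ ω, β.prod (fun i m => y ω i ^ m) ∂μ)

theorem polyExpect_monomial (β : κ →₀ ℕ) (r : R) :
    polyExpect R y μ (monomial β r) =
      r * algebraMap ℝ R (∫ ω, β.prod (fun i m => y ω i ^ m) ∂μ) := by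
  have h : monomial β r = r • basisMonomials κ R β := by simp [smul_monomial]
  rw [h, map_smul, polyExpect, Module.Basis.constr_basis, smul_eq_mul]

theorem polyExpect_C [IsProbabilityMeasure μ] (r : R) : polyExpect R y μ (C r) = r := by
  rw [C_apply, polyExpect_monomial]
  simp

theorem aevalTower_monomial (e : R →ₐ[ℝ] ℝ) (x : κ → ℝ) (β : κ →₀ ℕ) (r : R) :
    aevalTower e x (monomial β r) = e r * β.prod fun i m => x i ^ m :=
  eval₂_monomial _ _

theorem HasJointMoments.integrable_aevalTower (hy : HasJointMoments y μ) (e : R →ₐ[ℝ] ℝ)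
    (p : MvPolynomial κ R) : Integrable (fun ω => aevalTower e (y ω) p) μ := by
  induction p using MvPolynomial.induction_on' with
  | monomial β r =>
    simp only [aevalTower_monomial]
    exact (hy β).const_mul _
  | add p q hp hq =>
    simp only [map_add]
    exact hp.add hq

theorem HasJointMoments.apply_polyExpect (hy : HasJointMoments y μ) (e : R →ₐ[ℝ] ℝ)
    (p : MvPolynomial κ R) : e (polyExpect R y μ p) = ∫ ω, aevalTower e (y ω) p ∂μ := by
  induction p using MvPolynomial.induction_on' with
  | monomial β r =>
    simp only [aevalTower_monomial, integral_const_mul, polyExpect_monomial, map_mul]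
    rw [AlgHom.commutes]
    rfl
  | add p q hp hq =>
    simp only [map_add]
    rw [integral_add (hy.integrable_aevalTower e p) (hy.integrable_aevalTower e q), hp, hq]

theorem HasJointMoments.aevalTower_mapCoeffs_polyExpect (hy : HasJointMoments y μ)
    (e : R →ₐ[ℝ] ℝ) (x : σ → ℝ) (p : MvPolynomial σ (MvPolynomial κ R)) :
    aevalTower e x (mapCoeffs (polyExpect R y μ) p) =
      ∫ ω, aevalTower (aevalTower e (y ω)) x p ∂μ := by
  have hint (q : MvPolynomial σ (MvPolynomial κ R)) :
      Integrable (fun ω => aevalTower (aevalTower e (y ω)) x q) μ := by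
    induction q using MvPolynomial.induction_on' with
    | monomial α q =>
      simp only [aevalTower_monomial]
      exact (hy.integrable_aevalTower e q).mul_const _
    | add p q hp hq =>
      simp only [map_add]
      exact hp.add hq
  induction p using MvPolynomial.induction_on' with
  | monomial α q =>
    simp only [mapCoeffs_monomial, aevalTower_monomial, integral_mul_const]
    rw [hy.apply_polyExpect]
  | add p q hp hq =>
    simp only [map_add]
    rw [integral_add (hint p) (hint q), hp, hq]

end PolyExpect

section Noise

open MvPolynomial

variable {n : ℕ}

instance isProbabilityMeasure_stdGaussian (n : ℕ) :
    IsProbabilityMeasure (_root_.stdGaussian n) := by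
  unfold _root_.stdGaussian
  infer_instance

theorem hasJointMoments_stdGaussian (n : ℕ) : HasJointMoments id (_root_.stdGaussian n) := by
  intro β
  have hpow (m : ℕ) : Integrable (fun t : ℝ => t ^ m) (gaussianReal 0 1) := by
    have hnorm := (memLp_id_gaussianReal (μ := 0) (v := 1) m).integrable_norm_pow'
    refine (integrable_norm_iff (by fun_prop)).1 ?_
    simpa only [norm_pow, id_eq] using hnorm
  simp only [Finsupp.prod_fintype _ _ fun _ => pow_zero _]
  exact Integrable.fintype_prod fun i => hpow (β i)

/-- The substitution `x ↦ cos θ • x + sin θ • Y` underlying `noisy`, with `Y` a vector of polynomial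
indeterminates: its `i`-th coordinate is the variable `ι i`. -/
noncomputable def noisySubst {κ : Type*} {R : Type*} [CommRing R] [Algebra ℝ R] (θ : ℝ)
    (ι : Fin n → κ) :
    MvPolynomial (Fin n) R →ₐ[R] MvPolynomial (Fin n) (MvPolynomial κ R) :=
  scaleTranslate (algebraMap ℝ _ (Real.cos θ)) fun i => algebraMap ℝ _ (Real.sin θ) * X (ι i)

variable {κ R : Type*} [CommRing R] [Algebra ℝ R]

theorem aevalTower_noisySubst (θ : ℝ) (ι : Fin n → κ) (e : R →ₐ[ℝ] ℝ) (y : κ → ℝ) (x : Fin n → ℝ)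
    (p : MvPolynomial (Fin n) R) :
    aevalTower (aevalTower e y) x (noisySubst θ ι p) = aevalTower e (noisy θ (y ∘ ι) x) p := by
  rw [noisySubst, aevalTower_scaleTranslate, aevalTower_comp_toAlgHom]
  congr 2
  funext i
  rw [map_mul, AlgHom.commutes, AlgHom.commutes, aevalTower_X]
  rfl

theorem noisySubst_sub_smul_map_mem (θ : ℝ) (ι : Fin n → κ) {k : ℕ} {p : MvPolynomial (Fin n) R}
    (hp : p ∈ totalDegreeLT (Fin n) R (k + 1)) :
    noisySubst θ ι p - Real.cos θ ^ k • map C p ∈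
      totalDegreeLT (Fin n) (MvPolynomial κ R) k := by
  have h := scaleTranslate_sub_smul_map_mem (algebraMap ℝ (MvPolynomial κ R) (Real.cos θ))
    (fun i => algebraMap ℝ _ (Real.sin θ) * X (ι i)) hp
  rwa [← map_pow, algebraMap_smul] at h

/-- The averaging operator `avgOp`, acting on polynomials instead of polynomial functions. -/
noncomputable def avgPoly (n : ℕ) (θ : ℝ) : Module.End ℝ (MvPolynomial (Fin n) ℝ) :=
  mapCoeffs (polyExpect ℝ id (_root_.stdGaussian n)) ∘ₗ (noisySubst θ id).toLinearMap

theorem avgOp_eval (θ : ℝ) (p : MvPolynomial (Fin n) ℝ) :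
    avgOp n θ (fun x => eval x p) = fun x => eval x (avgPoly n θ p) := by
  funext x
  have h := (hasJointMoments_stdGaussian n).aevalTower_mapCoeffs_polyExpect (AlgHom.id ℝ ℝ) x
    (noisySubst θ id p)
  simp only [aevalTower_noisySubst] at h
  simp only [aevalTower_id, aeval_eq_eval] at h
  exact h.symm

theorem iterate_avgOp_eval (θ : ℝ) (m : ℕ) (p : MvPolynomial (Fin n) ℝ) :
    (avgOp n θ)^[m] (fun x => eval x p) = fun x => eval x ((avgPoly n θ ^ m) p) := by
  induction m generalizing p with
  | zero => rfl
  | succ m ih => rw [Function.iterate_succ_apply, avgOp_eval, ih, pow_succ, Module.End.mul_apply]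

theorem avgPoly_sub_smul_mem (θ : ℝ) {k : ℕ} {p : MvPolynomial (Fin n) ℝ}
    (hp : p ∈ totalDegreeLT (Fin n) ℝ (k + 1)) :
    avgPoly n θ p - Real.cos θ ^ k • p ∈ totalDegreeLT (Fin n) ℝ k := by
  have hmap : mapCoeffs (polyExpect ℝ id (_root_.stdGaussian n)) (map C p) = p := by
    ext α
    rw [coeff_mapCoeffs, coeff_map, polyExpect_C]
  have h := mapCoeffs_mem_totalDegreeLT (polyExpect ℝ id (_root_.stdGaussian n))
    (noisySubst_sub_smul_map_mem θ id hp)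
  rwa [map_sub, map_smul, hmap] at h

/-- The noisy derivative of a polynomial, in the directions given by two independent vectors of
indeterminates that are adjoined to the coefficient ring. -/
noncomputable def noisyDerivPoly (θ : ℝ) (p : MvPolynomial (Fin n) R) :
    MvPolynomial (Fin n) (MvPolynomial (Fin n ⊕ Fin n) R) :=
  θ⁻¹ • (noisySubst θ Sum.inl p - noisySubst θ Sum.inr p)

theorem noisyDeriv_aevalTower (θ : ℝ) (e : R →ₐ[ℝ] ℝ) (y z : Fin n → ℝ)
    (p : MvPolynomial (Fin n) R) :
    noisyDeriv θ y z (fun x => aevalTower e x p) = fun x =>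
      aevalTower (aevalTower e (Sum.elim y z)) x (noisyDerivPoly θ p) := by
  funext x
  rw [noisyDerivPoly, map_smul, map_sub, aevalTower_noisySubst, aevalTower_noisySubst,
    Sum.elim_comp_inl, Sum.elim_comp_inr, smul_eq_mul, inv_mul_eq_div, noisyDeriv]

theorem noisyDerivPoly_mem (θ : ℝ) {k : ℕ} {p : MvPolynomial (Fin n) R}
    (hp : p ∈ totalDegreeLT (Fin n) R (k + 1)) :
    noisyDerivPoly θ p ∈ totalDegreeLT (Fin n) (MvPolynomial (Fin n ⊕ Fin n) R) k := by
  have h := sub_mem (noisySubst_sub_smul_map_mem θ Sum.inl hp)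
    (noisySubst_sub_smul_map_mem θ Sum.inr hp)
  rw [sub_sub_sub_cancel_right] at h
  exact Submodule.smul_of_tower_mem _ _ h

theorem exists_derivNormSq_aevalTower_eq (θ : ℝ) (ℓ : ℕ) {R : Type} [CommRing R] [Algebra ℝ R]
    {d : ℕ} {p : MvPolynomial (Fin n) R} (hp : p ∈ totalDegreeLT (Fin n) R (d + 1)) :
    ∃ q ∈ totalDegreeLT (Fin n) R (2 * d + 1), ∀ (e : R →ₐ[ℝ] ℝ) (x : Fin n → ℝ),
      derivNormSq n θ ℓ (fun w => aevalTower e w p) x = aevalTower e x q := by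
  -- Each derivative adjoins its two directions to the coefficient ring.
  induction ℓ generalizing R with
  | zero =>
    refine ⟨p ^ 2, ?_, fun e x => (map_pow _ _ _).symm⟩
    rw [sq, two_mul]
    exact mul_mem_totalDegreeLT (j := d) (k := d + 1) hp hp
  | succ ℓ ih =>
    obtain ⟨q, hq, hpq⟩ := ih (totalDegreeLT_mono (Nat.le_succ d) (noisyDerivPoly_mem θ hp))
    refine ⟨mapCoeffs (polyExpect R (fun YZ => Sum.elim YZ.1 YZ.2)
      ((_root_.stdGaussian n).prod (_root_.stdGaussian n))) q,
      mapCoeffs_mem_totalDegreeLT _ hq, fun e x => ?_⟩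
    have hmom := (hasJointMoments_stdGaussian n).sumElim (hasJointMoments_stdGaussian n)
    simp only [derivNormSq, noisyDeriv_aevalTower, hpq]
    exact (hmom.aevalTower_mapCoeffs_polyExpect e x q).symm

theorem exists_derivNormSq_eval_eq (θ : ℝ) (ℓ : ℕ) {d : ℕ} {p : MvPolynomial (Fin n) ℝ}
    (hp : p.totalDegree ≤ d) :
    ∃ q : MvPolynomial (Fin n) ℝ, q.totalDegree ≤ 2 * d ∧
      derivNormSq n θ ℓ (fun w => eval w p) = fun x => eval x q := by
  obtain ⟨q, hq, hpq⟩ := exists_derivNormSq_aevalTower_eq θ ℓ (mem_totalDegreeLT_succ.2 hp)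
  refine ⟨q, mem_totalDegreeLT_succ.1 hq, funext fun x => ?_⟩
  simpa only [aevalTower_id, aeval_eq_eval] using hpq (AlgHom.id ℝ ℝ) x

end Noise

section Annihilator

open Polynomial

theorem aeval_prod_X_sub_C_apply_eq_zero {R M : Type*} [CommRing R] [AddCommGroup M] [Module R M]
    {T : Module.End R M} {V : ℕ → Submodule R M} {a : ℕ → R} (hV : V 0 = ⊥)
    (hT : ∀ k, ∀ x ∈ V (k + 1), T x - a k • x ∈ V k) (k : ℕ) {x : M} (hx : x ∈ V k) :
    aeval T (∏ j ∈ Finset.range k, (X - C (a j))) x = 0 := by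
  induction k generalizing x with
  | zero =>
    rw [hV, Submodule.mem_bot] at hx
    rw [hx, map_zero]
  | succ k ih =>
    have hfactor : aeval T (X - C (a k)) x = T x - a k • x := by simp
    rw [Finset.prod_range_succ, map_mul, Module.End.mul_apply, hfactor]
    exact ih (hT k x hx)

/-- A polynomial that annihilates the averaging operator with `cos θ = t` in degrees at most `2d`,
where its eigenvalues are `1, t, …, t ^ (2d)`. The factor `(X - 1) ^ (2d)` does not contribute to
that; it only raises the degree to `4d + 1`. -/
noncomputable def avgAnnihilator {R : Type*} [CommRing R] (d : ℕ) (t : R) : R[X] :=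
  (X - C 1) ^ (2 * d) * ∏ j ∈ Finset.range (2 * d + 1), (X - C (t ^ j))

theorem avgAnnihilator_map {R S : Type*} [CommRing R] [CommRing S] (f : R →+* S) (d : ℕ) (t : R) :
    (avgAnnihilator d t).map f = avgAnnihilator d (f t) := by
  simp [avgAnnihilator, Polynomial.map_prod]

theorem natDegree_avgAnnihilator {R : Type*} [CommRing R] [Nontrivial R] (d : ℕ) (t : R) :
    (avgAnnihilator d t).natDegree = 4 * d + 1 := by
  rw [avgAnnihilator, Monic.natDegree_mul ((monic_X_sub_C 1).pow _)
    (monic_prod_of_monic _ _ fun j _ => monic_X_sub_C _), (monic_X_sub_C 1).natDegree_pow,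
    natDegree_prod_of_monic _ _ fun j _ => monic_X_sub_C _]
  simp only [natDegree_X_sub_C, Finset.sum_const, Finset.card_range, smul_eq_mul]
  ring

theorem eval_one_avgAnnihilator {R : Type*} [CommRing R] (d : ℕ) (t : R) :
    (avgAnnihilator d t).eval 1 = 0 := by
  simp [avgAnnihilator, Finset.prod_range_succ']

theorem avgAnnihilator_one {R : Type*} [CommRing R] (d : ℕ) :
    avgAnnihilator d (1 : R) = (X - C 1) ^ (4 * d + 1) := by
  simp only [avgAnnihilator, one_pow, Finset.prod_const, Finset.card_range, ← pow_add]
  congr 1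
  ring

theorem abs_coeff_avgAnnihilator_one (d m : ℕ) :
    |(avgAnnihilator d (1 : ℝ)).coeff m| = (4 * d + 1).choose m := by
  rw [avgAnnihilator_one, sub_eq_add_neg, ← C_neg, coeff_X_add_C_pow, abs_mul]
  simp

theorem continuous_coeff_avgAnnihilator (d m : ℕ) :
    Continuous fun t : ℝ => (avgAnnihilator d t).coeff m := by
  have h (t : ℝ) :
      (avgAnnihilator d t).coeff m = ((avgAnnihilator d (X : ℝ[X])).coeff m).eval t := by
    rw [← coe_evalRingHom, ← coeff_map, avgAnnihilator_map, coe_evalRingHom, eval_X]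
  simp only [h]
  exact Polynomial.continuous _

theorem choose_mem_Ioo_pow {d m : ℕ} (hd : 0 < d) (hm : m ≤ 4 * d + 1) :
    ((4 * d + 1).choose m : ℝ) ∈ Set.Ioo ((64 : ℝ) ^ d)⁻¹ (64 ^ d) := by
  have hlower : ((64 : ℝ) ^ d)⁻¹ < 1 := inv_lt_one_of_one_lt₀ (one_lt_pow₀ (by norm_num) hd.ne')
  have hpos : (1 : ℝ) ≤ (4 * d + 1).choose m := by exact_mod_cast Nat.choose_pos hm
  have hupper : (4 * d + 1).choose m < 64 ^ d :=
    calc (4 * d + 1).choose m ≤ 2 ^ (4 * d + 1) := Nat.choose_le_two_pow _ _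
      _ < 2 ^ (6 * d) := Nat.pow_lt_pow_right (by norm_num) (by omega)
      _ = 64 ^ d := by rw [pow_mul]; norm_num
  exact ⟨hlower.trans_le hpos, by exact_mod_cast hupper⟩

theorem exists_abs_coeff_avgAnnihilator_cos_bounds {d : ℕ} (hd : 0 < d) :
    ∃ θ₀ > (0 : ℝ), ∀ θ : ℝ, 0 < θ → θ ≤ θ₀ → ∀ m : Fin (4 * d + 2),
      ((64 : ℝ) ^ d)⁻¹ ≤ |(avgAnnihilator d (Real.cos θ)).coeff m| ∧
        |(avgAnnihilator d (Real.cos θ)).coeff m| ≤ 64 ^ d := by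
  have hmem (m : Fin (4 * d + 2)) : ∀ᶠ θ in nhds (0 : ℝ),
      |(avgAnnihilator d (Real.cos θ)).coeff m| ∈ Set.Ioo ((64 : ℝ) ^ d)⁻¹ (64 ^ d) := by
    have hcont : Continuous fun θ => |(avgAnnihilator d (Real.cos θ)).coeff m| :=
      ((continuous_coeff_avgAnnihilator d m).comp Real.continuous_cos).abs
    refine hcont.continuousAt.eventually_mem (isOpen_Ioo.mem_nhds ?_)
    rw [Real.cos_zero, abs_coeff_avgAnnihilator_one]
    exact choose_mem_Ioo_pow hd (Nat.lt_succ_iff.1 m.isLt)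
  obtain ⟨θ₀, hθ₀, hsub⟩ := mem_nhdsGT_iff_exists_Ioc_subset.1
    (nhdsWithin_le_nhds (Filter.eventually_all.2 hmem))
  exact ⟨θ₀, hθ₀, fun θ hθ hθ' m => ⟨(hsub ⟨hθ, hθ'⟩ m).1.le, (hsub ⟨hθ, hθ'⟩ m).2.le⟩⟩

theorem aeval_avgPoly_avgAnnihilator {n d : ℕ} (θ : ℝ) {q : MvPolynomial (Fin n) ℝ}
    (hq : q.totalDegree ≤ 2 * d) : aeval (avgPoly n θ) (avgAnnihilator d (Real.cos θ)) q = 0 := by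
  rw [avgAnnihilator, map_mul, Module.End.mul_apply,
    aeval_prod_X_sub_C_apply_eq_zero totalDegreeLT_zero (fun k p => avgPoly_sub_smul_mem θ) _
      (mem_totalDegreeLT_succ.2 hq), map_zero]

end Annihilator

/-- Linear relation among the averaged derivative norms: there are constants
`c_0, …, c_{4d+1}`, bounded above and below, summing to zero, with
`Σ_m c_m |p_θ^{(ℓ),m}(X)|₂² = 0`. -/
theorem stmt14 :
    ∃ C > (1:ℝ),
      ∀ d : ℕ, 0 < d → ∃ θ₀ > (0:ℝ),
        ∀ θ : ℝ, 0 < θ → θ ≤ θ₀ →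
          ∃ c : Fin (4*d+2) → ℝ,
            (∀ m, (C ^ d)⁻¹ ≤ |c m| ∧ |c m| ≤ C ^ d) ∧ (∑ m, c m = 0) ∧
            ∀ (n : ℕ) (p : MvPolynomial (Fin n) ℝ), p.totalDegree ≤ d →
              ∀ (X : Fin n → ℝ) (ℓ : ℕ),
                ∑ m : Fin (4*d+2), c m * qlm n θ p ℓ (m : ℕ) X = 0 := by
  refine ⟨64, by norm_num, fun d hd => ?_⟩
  obtain ⟨θ₀, hθ₀, hbounds⟩ := exists_abs_coeff_avgAnnihilator_cos_bounds hd
  refine ⟨θ₀, hθ₀, fun θ hθ hθ' => ?_⟩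
  have hdeg : (avgAnnihilator d (Real.cos θ)).natDegree < 4 * d + 2 := by
    rw [natDegree_avgAnnihilator]
    exact Nat.lt_succ_self _
  refine ⟨fun m => (avgAnnihilator d (Real.cos θ)).coeff m, hbounds θ hθ hθ', ?_,
    fun n p hp X ℓ => ?_⟩
  · have hsum := Polynomial.eval_eq_sum_range' hdeg 1
    simp only [eval_one_avgAnnihilator, one_pow, mul_one] at hsum
    rw [Fin.sum_univ_eq_sum_range fun m => (avgAnnihilator d (Real.cos θ)).coeff m, hsum]
  · obtain ⟨q, hq, hpq⟩ := exists_derivNormSq_eval_eq θ ℓ hp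
    have hker := congrArg (MvPolynomial.eval X) (aeval_avgPoly_avgAnnihilator θ hq)
    rw [Polynomial.aeval_eq_sum_range' hdeg] at hker
    simp only [LinearMap.sum_apply, LinearMap.smul_apply, map_sum, MvPolynomial.smul_eval,
      map_zero] at hker
    simp only [qlm, hpq, iterate_avgOp_eval]
    rw [← hker, Fin.sum_univ_eq_sum_range fun m => (avgAnnihilator d (Real.cos θ)).coeff m *
      MvPolynomial.eval X ((avgPoly n θ ^ m) q)]
end
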